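/- arXiv:1309.5842 — 9 statements merged into one kernel-verified Lean document; each statement's English description precedes it below -/
import Mathlib

section
/- Let C ∈ M_n(ℂ) satisfy C · conj(C) = I, where conj(C) is the entrywise complex conjugate of C. Then there exists a matrix D ∈ M_n(ℂ) such that D² = C and D · conj(D) = I. -/
open Matrix

/-! The principal square root, with spectrum in the half-plane `H` formed by `re z > 0` and the
positive imaginary axis, exists for every invertible `C`: interpolate the scalar square root on the
spectrum of `C` and correct by Newton iteration, which terminates because the error is nilpotent.
It is unique among commuting square roots, since `H` is closed under addition and omits `0`. As `H`
is also invariant under `z ↦ conj(z)⁻¹`, and `conj(C)⁻¹ = C`, both `D` and `conj(D)⁻¹` are principal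
square roots of `C`; hence they agree. -/

open Polynomial

open scoped ComplexConjugate

section Spectrum

variable {K A B : Type*} [Field K] [Ring A] [Algebra K A] [Ring B] [Algebra K B]

lemma mem_spectrum_iff_isRoot_minpoly {a : A} (ha : IsIntegral K a) {z : K} :
    z ∈ spectrum K a ↔ (minpoly K a).IsRoot z := by
  constructor
  · intro hz
    rcases subsingleton_or_nontrivial A with _ | _
    · exact absurd hz (by simp [spectrum.of_subsingleton])
    have h := spectrum.subset_polynomial_aeval a (minpoly K a) ⟨z, hz, rfl⟩
    rwa [minpoly.aeval, spectrum.zero_eq, Set.mem_singleton_iff] at h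
  · intro hz
    obtain ⟨q, hq⟩ := dvd_iff_isRoot.mpr hz
    have hq_monic : q.Monic := (monic_X_sub_C z).of_mul_monic_left (hq ▸ minpoly.monic ha)
    have hq_ne : aeval a q ≠ 0 := by
      refine minpoly.aeval_ne_zero_of_dvdNotUnit_minpoly ha hq_monic ?_
      refine ⟨hq_monic.ne_zero, X - C z, not_isUnit_X_sub_C z, ?_⟩
      rw [hq, mul_comm]
    have h_mul : (a - algebraMap K A z) * aeval a q = 0 := by
      simpa [hq] using minpoly.aeval K a
    rw [spectrum.mem_iff, IsUnit.sub_iff]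
    exact fun h => hq_ne (h.mul_right_eq_zero.mp h_mul)

lemma spectrum_map_of_injective {a : A} (ha : IsIntegral K a) (f : A →ₐ[K] B)
    (hf : Function.Injective f) : spectrum K (f a) = spectrum K a := by
  ext z
  rw [mem_spectrum_iff_isRoot_minpoly ha, mem_spectrum_iff_isRoot_minpoly (ha.map f),
    minpoly.algHom_eq f hf]

lemma spectrum_subset_of_isNilpotent_sub {R : Type*} [CommSemiring R] [Algebra R A] {x y : A}
    (hxy : Commute x y) (h : IsNilpotent (x - y)) : spectrum R y ⊆ spectrum R x := by
  intro z hz hx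
  refine hz ?_
  have h_comm : Commute (algebraMap R A z - x) (x - y) :=
    (Algebra.commute_algebraMap_left z _).sub_left ((Commute.refl x).sub_right hxy)
  simpa [spectrum.mem_resolventSet_iff] using h.isUnit_add_left_of_commute hx h_comm.symm

lemma spectrum_aeval [IsAlgClosed K] [FiniteDimensional K A] (a : A) (p : K[X]) :
    spectrum K (aeval a p) = p.eval '' spectrum K a := by
  rcases subsingleton_or_nontrivial A with _ | _
  · simp only [spectrum.of_subsingleton, Set.image_empty]
  · exact spectrum.map_polynomial_aeval_of_nonempty a p
      (spectrum.nonempty_of_isAlgClosed_of_finiteDimensional K a)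

lemma isNilpotent_aeval_of_eval_eq_zero [IsAlgClosed K] {a : A} (ha : IsIntegral K a) {p : K[X]}
    (hp : ∀ z ∈ spectrum K a, p.eval z = 0) : IsNilpotent (aeval a p) := by
  have h_dvd : minpoly K a ∣ p ^ (minpoly K a).roots.card := by
    conv_lhs => rw [(IsAlgClosed.splits (minpoly K a)).eq_prod_roots_of_monic (minpoly.monic ha)]
    rw [← Multiset.prod_replicate, ← Multiset.map_const']
    refine Multiset.prod_dvd_prod_of_dvd _ _ fun z hz => dvd_iff_isRoot.mpr (hp z ?_)
    exact (mem_spectrum_iff_isRoot_minpoly ha).mpr (isRoot_of_mem_roots hz)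
  refine ⟨(minpoly K a).roots.card, ?_⟩
  rw [← map_pow]
  exact aeval_eq_zero_of_dvd_aeval_eq_zero h_dvd (minpoly.aeval K a)

end Spectrum

section Roots

lemma exists_pow_eq_of_isNilpotent_pow_sub {R : Type*} [CommRing R] {x a : R} {k : ℕ}
    (hk : IsUnit (k : R)) (ha : IsUnit a) (h : IsNilpotent (x ^ k - a)) :
    ∃ r, r ^ k = a ∧ IsNilpotent (x - r) := by
  rcases eq_or_ne k 0 with rfl | hk_ne
  · rw [Nat.cast_zero, isUnit_zero_iff] at hk
    have := subsingleton_of_zero_eq_one hk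
    exact ⟨0, Subsingleton.elim _ _, 0, Subsingleton.elim _ _⟩
  have hx : IsUnit x := by
    rw [← isUnit_pow_iff hk_ne]
    simpa using h.isUnit_add_left_of_commute ha (Commute.all _ _)
  obtain ⟨r, ⟨h_nil, h_root⟩, -⟩ := existsUnique_nilpotent_sub_and_aeval_eq_zero
    (P := X ^ k - C a) (x := x) (by simpa using h)
    (by simpa [derivative_X_pow] using hk.mul (hx.pow (k - 1)))
  exact ⟨r, by simpa [sub_eq_zero] using h_root, h_nil⟩

variable {K : Type*} [Field K] [IsAlgClosed K]

lemma exists_pow_eq_spectrum_subset_image {R : Type*} [CommRing R] [Algebra K R]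
    [FiniteDimensional K R] {a : R} (ha : IsUnit a) {k : ℕ} (hk : (k : K) ≠ 0) {f : K → K}
    (hf : ∀ z ∈ spectrum K a, f z ^ k = z) :
    ∃ r, r ^ k = a ∧ spectrum K r ⊆ f '' spectrum K a := by
  classical
  have ha_int : IsIntegral K a := Algebra.IsIntegral.isIntegral a
  obtain ⟨q, hq⟩ : ∃ q : K[X], ∀ z ∈ spectrum K a, q.eval z = f z := by
    refine ⟨Lagrange.interpolate (minpoly K a).roots.toFinset id f, fun z hz => ?_⟩
    refine Lagrange.eval_interpolate_at_node (v := id) f (Set.injOn_id _) ?_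
    rw [Multiset.mem_toFinset, mem_roots (minpoly.ne_zero ha_int)]
    exact (mem_spectrum_iff_isRoot_minpoly ha_int).mp hz
  have h_nil : IsNilpotent (aeval a q ^ k - a) := by
    have h := isNilpotent_aeval_of_eval_eq_zero ha_int (p := q ^ k - X)
      fun z hz => by simp [hq z hz, hf z hz]
    simpa using h
  have hk_unit : IsUnit (k : R) := by simpa using (IsUnit.mk0 _ hk).map (algebraMap K R)
  obtain ⟨r, hr, hr_nil⟩ := exists_pow_eq_of_isNilpotent_pow_sub hk_unit ha h_nil
  refine ⟨r, hr, ?_⟩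
  calc spectrum K r ⊆ spectrum K (aeval a q) :=
        spectrum_subset_of_isNilpotent_sub (Commute.all _ _) hr_nil
    _ = q.eval '' spectrum K a := spectrum_aeval a q
    _ = f '' spectrum K a := Set.image_congr hq

variable {A : Type*} [Ring A] [Algebra K A]

lemma exists_mem_adjoin_pow_eq_spectrum_subset_image {a : A} (ha : IsIntegral K a)
    (ha_unit : IsUnit a) {k : ℕ} (hk : (k : K) ≠ 0) {f : K → K}
    (hf : ∀ z ∈ spectrum K a, f z ^ k = z) :
    ∃ r ∈ Algebra.adjoin K {a}, r ^ k = a ∧ spectrum K r ⊆ f '' spectrum K a := by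
  let S := Algebra.adjoin K {a}
  have : FiniteDimensional K S := ⟨(Submodule.fg_top _).mpr ha.fg_adjoin_singleton⟩
  have h_spec (s : S) : spectrum K (s : A) = spectrum K s :=
    spectrum_map_of_injective (Algebra.IsIntegral.isIntegral s) S.val Subtype.val_injective
  let b : S := ⟨a, Algebra.self_mem_adjoin_singleton K a⟩
  have hb : spectrum K a = spectrum K b := h_spec b
  have hb_unit : IsUnit b := by
    rwa [← spectrum.zero_notMem_iff K, ← hb, spectrum.zero_notMem_iff]
  obtain ⟨r, hr, hr_spec⟩ := exists_pow_eq_spectrum_subset_image hb_unit hk (hb ▸ hf)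
  refine ⟨r, r.2, congrArg Subtype.val hr, ?_⟩
  rwa [h_spec, hb]

lemma sub_dvd_aeval_sub_aeval_of_commute {R : Type*} [CommSemiring R] [Algebra R A]
    {x y : A} (hxy : Commute x y) (p : R[X]) : x - y ∣ aeval x p - aeval y p := by
  simp only [aeval_eq_sum_range, ← Finset.sum_sub_distrib, ← smul_sub]
  exact Finset.dvd_sum fun n _ => dvd_smul_of_dvd _ (hxy.sub_dvd_pow_sub_pow n)

lemma eq_of_sq_eq_sq_of_spectrum_add_ne_zero {x y : A} (hxy : Commute x y) (hy : IsIntegral K y)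
    (h_sq : x ^ 2 = y ^ 2) (h_add : ∀ μ ∈ spectrum K x, ∀ ν ∈ spectrum K y, μ + ν ≠ 0) :
    x = y := by
  -- With `p` the minimal polynomial of `y`, `x + y` divides `p(y) - p(-x) = -p(-x)`, a unit.
  have h_unit : IsUnit (aeval (-x) (minpoly K y)) := by
    by_contra h
    rw [(IsAlgClosed.splits (minpoly K y)).eq_prod_roots_of_monic (minpoly.monic hy)] at h
    obtain ⟨ν, hν, hν_root⟩ := spectrum.exists_mem_of_not_isUnit_aeval_prod h
    refine h_add (-ν) ?_ ν ((mem_spectrum_iff_isRoot_minpoly hy).mpr hν_root) (neg_add_cancel ν)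
    rwa [← Set.mem_neg, spectrum.neg_eq]
  have h_dvd : x + y ∣ aeval (-x) (minpoly K y) := by
    have h := sub_dvd_aeval_sub_aeval_of_commute hxy.symm.neg_right (minpoly K y)
    rwa [minpoly.aeval, zero_sub, dvd_neg, sub_neg_eq_add, add_comm] at h
  obtain ⟨c, hc⟩ := h_dvd
  have h_mul : (x - y) * aeval (-x) (minpoly K y) = 0 := by
    rw [hc, ← mul_assoc, ← hxy.mul_self_sub_mul_self_eq', ← sq, ← sq, h_sq, sub_self,
      zero_mul]
  exact sub_eq_zero.mp (h_unit.mul_left_eq_zero.mp h_mul)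

end Roots

lemma map_mul_self_eq_one_of_self_mul_map_eq_one {M F : Type*} [Monoid M] [FunLike F M M]
    [MonoidHomClass F M M] {φ : F} {a : M} (h : a * φ a = 1) : φ a * a = 1 := by
  have h_map : φ a * φ (φ a) = 1 := by rw [← map_mul, h, map_one]
  rwa [← left_inv_eq_right_inv h h_map] at h_map

section Semilinear

variable {R S A B : Type*} [CommSemiring R] [CommSemiring S] [Ring A] [Algebra R A] [Ring B]
  [Algebra S B] {σ : R → S} {φ : A →+* B}

lemma mem_spectrum_of_map_mem_spectrum (hφ : ∀ r, φ (algebraMap R A r) = algebraMap S B (σ r))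
    {a : A} {r : R} (h : σ r ∈ spectrum S (φ a)) : r ∈ spectrum R a := by
  intro hr
  refine h ?_
  simpa only [spectrum.mem_resolventSet_iff, map_sub, hφ] using hr.map φ

lemma commute_map_of_mem_adjoin_singleton
    (hφ : ∀ r, φ (algebraMap R A r) = algebraMap S B (σ r)) {a x : A} {b : B}
    (hx : x ∈ Algebra.adjoin R {a}) (hab : Commute (φ a) b) : Commute (φ x) b := by
  induction hx using Algebra.adjoin_induction with
  | mem x hx => rwa [Set.mem_singleton_iff.mp hx]
  | algebraMap r => exact hφ r ▸ Algebra.commutes (σ r) b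
  | add x y _ _ hx hy => exact map_add φ x y ▸ hx.add_left hy
  | mul x y _ _ hx hy => exact map_mul φ x y ▸ hx.mul_left hy

end Semilinear

/-- The half-plane of principal square roots of nonzero complex numbers: the open right half-plane
together with the positive imaginary axis. Including this ray makes it contain exactly one of `z`
and `-z` for each `z ≠ 0`. -/
def principalHalfPlane : Set ℂ := {z | 0 < z.re ∨ z.re = 0 ∧ 0 < z.im}

lemma exists_mem_principalHalfPlane_sq_eq {z : ℂ} (hz : z ≠ 0) :
    ∃ w ∈ principalHalfPlane, w ^ 2 = z := by
  obtain ⟨w, rfl⟩ := IsAlgClosed.exists_pow_nat_eq z two_pos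
  have h_or : w ∈ principalHalfPlane ∨ -w ∈ principalHalfPlane := by
    have hw : w.re ≠ 0 ∨ w.im ≠ 0 := by
      contrapose! hz
      simp [Complex.ext (z := w) (w := 0) hz.1 hz.2]
    simp only [principalHalfPlane, Set.mem_ofPred_eq, Complex.neg_re, Complex.neg_im]
    grind
  rcases h_or with h | h
  · exact ⟨w, h, rfl⟩
  · exact ⟨-w, h, neg_sq w⟩

lemma add_ne_zero_of_mem_principalHalfPlane {z w : ℂ} (hz : z ∈ principalHalfPlane)
    (hw : w ∈ principalHalfPlane) : z + w ≠ 0 := by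
  simp only [principalHalfPlane, Set.mem_ofPred_eq] at hz hw
  rw [Ne, Complex.ext_iff, Complex.add_re, Complex.add_im, Complex.zero_re, Complex.zero_im]
  grind

lemma mem_principalHalfPlane_of_conj_inv {z : ℂ} (hz : conj z⁻¹ ∈ principalHalfPlane) :
    z ∈ principalHalfPlane := by
  rcases eq_or_ne z 0 with rfl | hz_ne
  · simpa using hz
  have h_pos : 0 < Complex.normSq z := Complex.normSq_pos.mpr hz_ne
  simpa [principalHalfPlane, Complex.inv_re, Complex.inv_im, neg_div, h_pos, h_pos.ne',
    div_pos_iff_of_pos_right] using hz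

lemma exists_mem_adjoin_sq_eq_spectrum_subset_principalHalfPlane {A : Type*} [Ring A] [Algebra ℂ A]
    {a : A} (ha : IsIntegral ℂ a) (ha_unit : IsUnit a) :
    ∃ d ∈ Algebra.adjoin ℂ {a}, d ^ 2 = a ∧ spectrum ℂ d ⊆ principalHalfPlane := by
  choose! f hf_mem hf_sq using fun z : ℂ => exists_mem_principalHalfPlane_sq_eq (z := z)
  have h_ne {z : ℂ} (hz : z ∈ spectrum ℂ a) : z ≠ 0 :=
    spectrum.ne_zero_of_mem_of_unit (a := ha_unit.unit) hz
  obtain ⟨d, hd, hd_sq, hd_spec⟩ := exists_mem_adjoin_pow_eq_spectrum_subset_image ha ha_unit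
    (k := 2) (by norm_num) fun z hz => hf_sq z (h_ne hz)
  refine ⟨d, hd, hd_sq, hd_spec.trans ?_⟩
  rintro _ ⟨z, hz, rfl⟩
  exact hf_mem z (h_ne hz)

lemma spectrum_inv_map_subset_principalHalfPlane {A B : Type*} [Ring A] [Algebra ℂ A] [Ring B]
    [Algebra ℂ B] {φ : A →+* B} (hφ : ∀ z, φ (algebraMap ℂ A z) = algebraMap ℂ B (conj z)) {u : Aˣ}
    (hu : spectrum ℂ (u : A) ⊆ principalHalfPlane) :
    spectrum ℂ (↑(Units.map (φ : A →* B) u)⁻¹ : B) ⊆ principalHalfPlane := by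
  intro z hz
  rw [← spectrum.map_inv, Set.mem_inv] at hz
  refine mem_principalHalfPlane_of_conj_inv (hu (mem_spectrum_of_map_mem_spectrum hφ ?_))
  rwa [Complex.conj_conj]

theorem exists_sqrt_conj_inv_general {A : Type*} [Ring A] [Algebra ℂ A] (φ : A →+* A)
    (hφ : ∀ z, φ (algebraMap ℂ A z) = algebraMap ℂ A (conj z)) {a : A} (ha : IsIntegral ℂ a)
    (h_inv : a * φ a = 1) : ∃ d, d ^ 2 = a ∧ d * φ d = 1 := by
  have h_inv' : φ a * a = 1 := map_mul_self_eq_one_of_self_mul_map_eq_one h_inv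
  have ha_unit : IsUnit a := ⟨⟨a, φ a, h_inv, h_inv'⟩, rfl⟩
  obtain ⟨d, hd, hd_sq, hd_spec⟩ :=
    exists_mem_adjoin_sq_eq_spectrum_subset_principalHalfPlane ha ha_unit
  have hd_comm : Commute (φ d) d := by
    have h : Commute (φ a) d :=
      Algebra.commute_of_mem_adjoin_singleton_of_commute hd (h_inv'.trans h_inv.symm)
    exact commute_map_of_mem_adjoin_singleton hφ hd h
  have hd_unit : IsUnit d := by rwa [← isUnit_pow_iff two_ne_zero, hd_sq]
  obtain ⟨u, rfl⟩ := hd_unit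
  set v := Units.map (φ : A →* A) u with hv
  have hv_sq : (↑v⁻¹ : A) ^ 2 = u ^ 2 := by
    rw [← Units.val_pow_eq_pow_val, inv_pow, hd_sq]
    refine Units.inv_eq_of_mul_eq_one_left ?_
    simpa [hv, ← map_pow, hd_sq] using h_inv
  have h_eq : (↑v⁻¹ : A) = u :=
    eq_of_sq_eq_sq_of_spectrum_add_ne_zero hd_comm.units_inv_left
      (.of_pow two_pos (hd_sq.symm ▸ ha)) hv_sq fun μ hμ ν hν =>
        add_ne_zero_of_mem_principalHalfPlane
          (spectrum_inv_map_subset_principalHalfPlane hφ hd_spec hμ) (hd_spec hν)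
  refine ⟨u, hd_sq, ?_⟩
  calc (u : A) * φ u = ↑v⁻¹ * ↑v := by rw [h_eq, hv, Units.coe_map, MonoidHom.coe_coe]
    _ = 1 := v.inv_mul

/-- If `C ∈ Mₙ(ℂ)` satisfies `C ⬝ conj(C) = I`, then there exists `D ∈ Mₙ(ℂ)` with
`D² = C` and `D ⬝ conj(D) = I`, where `conj` is the entrywise complex conjugate. -/
theorem exists_sqrt_conj_inv {n : ℕ} (C : Matrix (Fin n) (Fin n) ℂ)
    (hC : C * C.map (starRingEnd ℂ) = 1) :
    ∃ D : Matrix (Fin n) (Fin n) ℂ, D ^ 2 = C ∧ D * D.map (starRingEnd ℂ) = 1 :=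
  exists_sqrt_conj_inv_general (starRingEnd ℂ).mapMatrix
    (fun z => by simp [algebraMap_eq_diagonal, diagonal_map])
    (Algebra.IsIntegral.isIntegral C) hC
end

section
/- (Fong–Sourour) Let A_j, B_j ∈ M_n(ℂ) for j = 1, …, m, and assume the set {B_1, …, B_m} is linearly independent. Define the linear map Φ : M_n(ℂ) → M_n(ℂ) by Φ(X) = Σ_{j=1}^m A_j X B_j. Then Φ is identically zero if and only if A_j = 0 for all j. -/
open Matrix

/-! Writing `E c d` for the matrix units, `A * E c d * B` is the outer product of column `c` of `A`
and row `d` of `B`. Hence row `a` of `∑ j, A j * E c d * B j` is row `d` of `∑ j, A j a c • B j`.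
As `d` varies, the map `X ↦ ∑ j, A j * X * B j` thus determines this linear combination of the
`B j`, and linear independence determines its coefficients, the entries of the `A j`. -/

variable {R ι k l p q : Type*} [Semiring R] [Fintype k] [Fintype l]

section MatrixUnits

variable [DecidableEq k] [DecidableEq l]

theorem mul_single_one_mul_eq_vecMulVec (A : Matrix p k R) (B : Matrix l q R) (c : k) (d : l) :
    A * single c d (1 : R) * B = vecMulVec (A.col c) (B.row d) := by
  rw [single_eq_single_vecMulVec_single, mul_vecMulVec, vecMulVec_mul, mulVec_single_one,
    single_one_vecMul]

theorem sum_mul_single_one_mul_apply [Fintype ι] (A : ι → Matrix p k R) (B : ι → Matrix l q R)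
    (a : p) (b : q) (c : k) (d : l) :
    (∑ j, A j * single c d (1 : R) * B j) a b = (∑ j, A j a c • B j) d b := by
  simp only [mul_single_one_mul_eq_vecMulVec, Matrix.sum_apply, vecMulVec_apply, col_apply,
    row_apply, Matrix.smul_apply, smul_eq_mul]

end MatrixUnits

theorem fong_sourour_indep_general [Fintype ι] (A A' : ι → Matrix p k R) {B : ι → Matrix l q R}
    (hB : LinearIndependent R B) :
    (∀ X : Matrix k l R, ∑ j, A j * X * B j = ∑ j, A' j * X * B j) ↔ ∀ j, A j = A' j := by
  classical
  refine ⟨fun h_eq j => ?_, fun h_eq X => by simp only [h_eq]⟩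
  ext a c
  have combination_eq : ∑ j, A j a c • B j = ∑ j, A' j a c • B j := by
    ext d b
    rw [← sum_mul_single_one_mul_apply, h_eq, sum_mul_single_one_mul_apply]
  exact Fintype.linearIndependent_iffₛ.mp hB _ _ combination_eq j

/-- (Fong–Sourour) If `{B₁,…,Bₘ}` is linearly independent in `Mₙ(ℂ)` and
`Φ(X) = ∑ⱼ Aⱼ X Bⱼ`, then `Φ ≡ 0` iff `Aⱼ = 0` for all `j`. -/
theorem fong_sourour_indep {n m : ℕ}
    (A B : Fin m → Matrix (Fin n) (Fin n) ℂ)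
    (hB : LinearIndependent ℂ B) :
    (∀ X : Matrix (Fin n) (Fin n) ℂ, ∑ j, A j * X * B j = 0) ↔ ∀ j, A j = 0 := by
  simpa using fong_sourour_indep_general A 0 hB
end

section
/- (Fong–Sourour) Let A_j, B_j ∈ M_n(ℂ) for j = 1, …, m. Assume that for some s < m the set {B_1, …, B_s} is linearly independent and spans the linear span of {B_1, …, B_m}, and write B_j = Σ_{k=1}^s c_{k,j} B_k for constants c_{k,j} ∈ ℂ and s+1 ≤ j ≤ m. Define Φ : M_n(ℂ) → M_n(ℂ) by Φ(X) = Σ_{j=1}^m A_j X B_j. Then Φ is identically zero if and only if A_k = − Σ_{j=s+1}^m c_{k,j} A_j for all 1 ≤ k ≤ s. -/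
open Matrix

/-!
Eliminating the dependent `B j` rewrites `Φ X` as `∑ k, D k * X * B k`, where `B k` runs over the
independent matrices only and `D k = A k + ∑ j, c k j • A j`. Testing on a matrix unit `X = E p q`
and reading off the entry `(i, l)` gives `∑ k, D k i p • B k q l = 0`, a linear relation among the
`B k` whose coefficients are the `(i, p)` entries of the `D k`. Hence `Φ = 0` forces `D = 0`.
-/

section MatrixUnits

variable {l m n o : Type*} [Fintype m] [Fintype n]

theorem mul_single_mul_apply {R : Type*} [NonUnitalSemiring R] [DecidableEq m] [DecidableEq n]
    (M : Matrix l m R) (p : m) (q : n) (r : R) (N : Matrix n o R) (i : l) (j : o) :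
    (M * single p q r * N) i j = M i p * r * N q j := by
  rw [Matrix.mul_apply, Fintype.sum_eq_single q, mul_single_apply_same]
  intro q' hq'
  rw [mul_single_apply_of_ne _ _ _ _ _ hq', zero_mul]

theorem forall_sum_mul_mul_eq_zero_iff_of_linearIndependent {R κ : Type*} [Ring R] [Fintype κ]
    (D : κ → Matrix l m R) {B : κ → Matrix n o R} (hB : LinearIndependent R B) :
    (∀ X : Matrix m n R, ∑ k, D k * X * B k = 0) ↔ ∀ k, D k = 0 := by
  classical
  refine ⟨fun hD k ↦ ?_, fun hD X ↦ by simp [hD]⟩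
  ext i p
  have entries_relation : ∑ k, D k i p • B k = 0 := by
    ext q j
    simpa [Matrix.sum_apply, mul_single_mul_apply] using congr_fun₂ (hD (single p q 1)) i j
  exact Fintype.linearIndependent_iff.mp hB (fun k ↦ D k i p) entries_relation k

end MatrixUnits

section Elimination

variable {l m n o ι κ : Type*} [Fintype m] [Fintype n] [Fintype ι] [Fintype κ] [DecidableEq ι]

theorem sum_mul_mul_eq_of_forall_compl_eq_sum_smul {R : Type*} [CommSemiring R] (e : κ ↪ ι)
    (A : ι → Matrix l m R) (B : ι → Matrix n o R) (c : κ → ι → R)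
    (hB : ∀ j ∈ (Finset.univ.map e)ᶜ, B j = ∑ k, c k j • B (e k)) (X : Matrix m n R) :
    ∑ j, A j * X * B j =
      ∑ k, (A (e k) + ∑ j ∈ (Finset.univ.map e)ᶜ, c k j • A j) * X * B (e k) := by
  have dependent_part : ∑ j ∈ (Finset.univ.map e)ᶜ, A j * X * B j =
      ∑ k, (∑ j ∈ (Finset.univ.map e)ᶜ, c k j • A j) * X * B (e k) := calc
    _ = ∑ j ∈ (Finset.univ.map e)ᶜ, ∑ k, c k j • A j * X * B (e k) :=
      Finset.sum_congr rfl fun j hj ↦ by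
        simp only [hB j hj, Matrix.mul_sum, Matrix.mul_smul, Matrix.smul_mul]
    _ = ∑ k, ∑ j ∈ (Finset.univ.map e)ᶜ, c k j • A j * X * B (e k) := Finset.sum_comm
    _ = _ := by simp only [Matrix.sum_mul]
  rw [← Finset.sum_add_sum_compl (Finset.univ.map e), Finset.sum_map, dependent_part,
    ← Finset.sum_add_distrib]
  simp only [Matrix.add_mul]

theorem fong_sourour_dep_general {R : Type*} [CommRing R] (e : κ ↪ ι)
    (A : ι → Matrix l m R) (B : ι → Matrix n o R) (c : κ → ι → R)
    (hind : LinearIndependent R fun k ↦ B (e k))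
    (hcomb : ∀ j ∈ (Finset.univ.map e)ᶜ, B j = ∑ k, c k j • B (e k)) :
    (∀ X : Matrix m n R, ∑ j, A j * X * B j = 0) ↔
      ∀ k, A (e k) = -∑ j ∈ (Finset.univ.map e)ᶜ, c k j • A j := by
  simp only [sum_mul_mul_eq_of_forall_compl_eq_sum_smul e A B c hcomb, eq_neg_iff_add_eq_zero]
  exact forall_sum_mul_mul_eq_zero_iff_of_linearIndependent _ hind

end Elimination

theorem filter_le_val_eq_compl_map_castLEEmb {s m : ℕ} (hs : s ≤ m) :
    Finset.univ.filter (fun j : Fin m ↦ s ≤ (j : ℕ)) = (Finset.univ.map (Fin.castLEEmb hs))ᶜ := by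
  rw [eq_compl_comm, ← Finset.coe_inj]
  simp [Fin.range_castLE]

/-- (Fong–Sourour) Suppose `{B₁,…,Bₛ}` is linearly independent (`s < m`) and
`Bⱼ = ∑_{k=1}^s c_{k,j} B_k` for `s+1 ≤ j ≤ m`.  With `Φ(X) = ∑ⱼ Aⱼ X Bⱼ`,
`Φ ≡ 0` iff `A_k = −∑_{j=s+1}^m c_{k,j} Aⱼ` for all `1 ≤ k ≤ s`. -/
theorem fong_sourour_dep {n m s : ℕ} (hs : s < m)
    (A B : Fin m → Matrix (Fin n) (Fin n) ℂ)
    (c : Fin s → Fin m → ℂ)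
    (hind : LinearIndependent ℂ (fun k : Fin s => B (Fin.castLE hs.le k)))
    (hcomb : ∀ j : Fin m, s ≤ (j : ℕ) →
      B j = ∑ k : Fin s, c k j • B (Fin.castLE hs.le k)) :
    (∀ X : Matrix (Fin n) (Fin n) ℂ, ∑ j, A j * X * B j = 0) ↔
      (∀ k : Fin s, A (Fin.castLE hs.le k) =
        -∑ j ∈ Finset.univ.filter (fun j : Fin m => s ≤ (j : ℕ)), c k j • A j) := by
  rw [filter_le_val_eq_compl_map_castLEEmb hs.le]
  exact fong_sourour_dep_general (Fin.castLEEmb hs.le) A B c hind fun j hj ↦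
    hcomb j (by simpa [← filter_le_val_eq_compl_map_castLEEmb] using hj)
end

section
/- Let 𝒜 : M_n(ℂ) → M_n(ℂ) be defined by 𝒜(X) = Σ_{j=1}^m E_j X F_j, where the sets {E_1, …, E_m} and {F_1, …, F_m} are each linearly independent in M_n(ℂ). If ⟨𝒜(X), Y⟩ = ⟨X, 𝒜(Y)⟩ for all X, Y ∈ M_n(ℂ) (Frobenius inner product), then there exist Hermitian matrices A_j, B_j ∈ M_n(ℂ), j = 1, …, m, such that 𝒜(X) = Σ_{j=1}^m A_j X B_j for all X ∈ M_n(ℂ); moreover the sets {A_1, …, A_m} and {B_1, …, B_m} are linearly independent. -/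
open Matrix

/-!
Identify `X ↦ ∑ⱼ Eⱼ X Fⱼ` with the tensor `∑ⱼ Eⱼ ⊗ Fⱼ`. This identification is injective and turns
the Frobenius adjoint into `star`, so the theorem concerns a tensor `t = ∑ⱼ eⱼ ⊗ fⱼ = star t` over
two complex `star`-modules. By linear independence, `span e` is determined by `t`, hence is
`star`-stable, hence has a self-adjoint basis `a`. Writing `t = ∑ⱼ aⱼ ⊗ bⱼ`, the equation
`t = star t` reads `∑ⱼ aⱼ ⊗ bⱼ = ∑ⱼ aⱼ ⊗ star bⱼ`, which forces `bⱼ = star bⱼ`.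
-/

open scoped TensorProduct ComplexStarModule

section SumTmul

variable {ι κ R V W : Type*} [Fintype ι] [Fintype κ]

lemma sum_tmul_left_injective [CommRing R] [AddCommGroup V] [Module R V] [AddCommGroup W]
    [Module R W] [Module.Flat R W] {a : ι → V} (ha : LinearIndependent R a) :
    Function.Injective fun b : ι → W ↦ ∑ i, a i ⊗ₜ[R] b i := by
  intro b b' h
  -- `ha` embeds `ι →₀ R` into `V`, and flatness keeps this injective after tensoring with `W`.
  have h_inj : Function.Injective ((Finsupp.linearCombination R a).rTensor W) :=
    Module.Flat.rTensor_preserves_injective_linearMap _ ha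
  have h_basis : ∑ i, Finsupp.basisSingleOne i ⊗ₜ[R] b i =
      ∑ i, Finsupp.basisSingleOne i ⊗ₜ[R] b' i :=
    h_inj (by simpa using h)
  have h_finsupp : Finsupp.equivFunOnFinite.symm b = Finsupp.equivFunOnFinite.symm b' :=
    TensorProduct.sum_tmul_basis_left_injective (Finsupp.basisSingleOne (R := R) (ι := ι)) <| by
      simpa [Finsupp.sum_fintype] using h_basis
  exact Finsupp.equivFunOnFinite.symm.injective h_finsupp

lemma exists_sum_tmul_eq_sum_tmul_of_mem_span [CommSemiring R] [AddCommMonoid V] [Module R V]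
    [AddCommMonoid W] [Module R W] {e : ι → V} {a : κ → V}
    (he : ∀ i, e i ∈ Submodule.span R (Set.range a)) (f : ι → W) :
    ∃ b : κ → W, ∑ i, e i ⊗ₜ[R] f i = ∑ k, a k ⊗ₜ[R] b k := by
  choose c hc using fun i ↦ (Submodule.mem_span_range_iff_exists_fun R).1 (he i)
  refine ⟨fun k ↦ ∑ i, c i k • f i, ?_⟩
  calc ∑ i, e i ⊗ₜ[R] f i = ∑ i, ∑ k, a k ⊗ₜ[R] (c i k • f i) := by
        simp only [← hc, TensorProduct.sum_tmul, TensorProduct.smul_tmul]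
    _ = ∑ k, a k ⊗ₜ[R] ∑ i, c i k • f i := by
        rw [Finset.sum_comm]
        simp only [TensorProduct.tmul_sum]

variable [Field R] [AddCommGroup V] [Module R V] [AddCommGroup W] [Module R W]
  {e : ι → V} {f : ι → W} {g : κ → V} {h : κ → W}

lemma mem_span_right_of_sum_tmul_eq (he : LinearIndependent R e)
    (heq : ∑ i, e i ⊗ₜ[R] f i = ∑ k, g k ⊗ₜ[R] h k) (i : ι) :
    f i ∈ Submodule.span R (Set.range h) := by
  let S := Submodule.span R (Set.range h)
  have h_zero (k : κ) : S.mkQ (h k) = 0 :=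
    (Submodule.Quotient.mk_eq_zero _).2 (Submodule.subset_span ⟨k, rfl⟩)
  have h_quotient : ∑ i, e i ⊗ₜ[R] S.mkQ (f i) = ∑ i, e i ⊗ₜ[R] (0 : W ⧸ S) := by
    simpa [h_zero] using congrArg (S.mkQ.lTensor V) heq
  exact (Submodule.Quotient.mk_eq_zero _).1 (congrFun (sum_tmul_left_injective he h_quotient) i)

lemma mem_span_left_of_sum_tmul_eq (hf : LinearIndependent R f)
    (heq : ∑ i, e i ⊗ₜ[R] f i = ∑ k, g k ⊗ₜ[R] h k) (i : ι) :
    e i ∈ Submodule.span R (Set.range g) :=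
  mem_span_right_of_sum_tmul_eq hf
    (by simpa only [map_sum, TensorProduct.comm_tmul] using congrArg (TensorProduct.comm R V W) heq)
    i

end SumTmul

lemma exists_linearIndependent_mem_span_range_eq {ι K V : Type*} [DivisionRing K] [AddCommGroup V]
    [Module K V] {v : ι → V} (hv : LinearIndependent K v) {s : Set V}
    (hs : Submodule.span K s = Submodule.span K (Set.range v)) :
    ∃ w : ι → V, (∀ i, w i ∈ s) ∧ LinearIndependent K w ∧
      Submodule.span K (Set.range w) = Submodule.span K (Set.range v) := by
  obtain ⟨t, ht_sub, ht_span, ht⟩ := exists_linearIndependent K s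
  have h_span : Submodule.span K (Set.range ((↑) : t → V)) = Submodule.span K (Set.range v) := by
    rw [Subtype.range_coe, ht_span, hs]
  let σ : ι ≃ t := (Module.Basis.span hv).indexEquiv
    ((Module.Basis.span ht).map (LinearEquiv.ofEq _ _ h_span))
  refine ⟨fun i ↦ σ i, fun i ↦ ht_sub (σ i).2, ht.comp σ σ.injective, ?_⟩
  rw [← h_span, ← σ.surjective.range_comp]
  rfl

lemma linearIndependent_star {ι R V : Type*} [Semiring R] [StarRing R] [AddCommMonoid V]
    [StarAddMonoid V] [Module R V] [StarModule R V] {v : ι → V} (hv : LinearIndependent R v) :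
    LinearIndependent R fun i ↦ star (v i) :=
  hv.map_of_injective_injectiveₛ star (starAddEquiv : V ≃+ V).toAddMonoidHom star_injective
    star_injective (by simp)

section ComplexStarModule

variable {ι V W : Type*} [AddCommGroup V] [StarAddMonoid V] [Module ℂ V] [StarModule ℂ V]
  [AddCommGroup W] [StarAddMonoid W] [Module ℂ W] [StarModule ℂ W]

lemma span_isSelfAdjoint_eq_of_star_mem {S : Submodule ℂ V} (hS : ∀ x ∈ S, star x ∈ S) :
    Submodule.span ℂ {x ∈ S | IsSelfAdjoint x} = S := by
  refine le_antisymm (Submodule.span_le.2 fun x hx ↦ hx.1) fun x hx ↦ ?_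
  have h_re : (ℜ x : V) ∈ S := by
    rw [realPart_apply_coe]
    exact S.smul_of_tower_mem _ (S.add_mem hx (hS x hx))
  have h_im : (ℑ x : V) ∈ S := by
    rw [imaginaryPart_apply_coe]
    exact S.smul_mem _ (S.smul_of_tower_mem _ (S.sub_mem hx (hS x hx)))
  rw [← realPart_add_I_smul_imaginaryPart x]
  exact Submodule.add_mem _ (Submodule.subset_span ⟨h_re, (ℜ x).2⟩)
    (Submodule.smul_mem _ _ (Submodule.subset_span ⟨h_im, (ℑ x).2⟩))

lemma exists_isSelfAdjoint_linearIndependent_span_range_eq {e : ι → V}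
    (he : LinearIndependent ℂ e) (hstar : ∀ i, star (e i) ∈ Submodule.span ℂ (Set.range e)) :
    ∃ a : ι → V, (∀ i, IsSelfAdjoint (a i)) ∧ LinearIndependent ℂ a ∧
      Submodule.span ℂ (Set.range a) = Submodule.span ℂ (Set.range e) := by
  have h_stable : ∀ x ∈ Submodule.span ℂ (Set.range e),
      star x ∈ Submodule.span ℂ (Set.range e) := by
    change Submodule.span ℂ (Set.range e) ≤
      (Submodule.span ℂ (Set.range e)).comap (starLinearEquiv ℂ : V ≃ₗ⋆[ℂ] V).toLinearMap
    rw [Submodule.span_le]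
    rintro _ ⟨i, rfl⟩
    exact hstar i
  obtain ⟨a, ha_mem, ha, ha_span⟩ :=
    exists_linearIndependent_mem_span_range_eq he (span_isSelfAdjoint_eq_of_star_mem h_stable)
  exact ⟨a, fun i ↦ (ha_mem i).2, ha, ha_span⟩

theorem exists_isSelfAdjoint_sum_tmul_eq [Fintype ι] {e : ι → V} {f : ι → W}
    (he : LinearIndependent ℂ e) (hf : LinearIndependent ℂ f)
    (ht : IsSelfAdjoint (∑ i, e i ⊗ₜ[ℂ] f i)) :
    ∃ (a : ι → V) (b : ι → W), (∀ i, IsSelfAdjoint (a i)) ∧ (∀ i, IsSelfAdjoint (b i)) ∧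
      ∑ i, e i ⊗ₜ[ℂ] f i = ∑ i, a i ⊗ₜ[ℂ] b i ∧
      LinearIndependent ℂ a ∧ LinearIndependent ℂ b := by
  have h_star : ∑ i, star (e i) ⊗ₜ[ℂ] star (f i) = ∑ i, e i ⊗ₜ[ℂ] f i := by
    simpa only [star_sum, TensorProduct.star_tmul] using ht.star_eq
  obtain ⟨a, ha_sa, ha, ha_span⟩ := exists_isSelfAdjoint_linearIndependent_span_range_eq he
    (mem_span_left_of_sum_tmul_eq (linearIndependent_star hf) h_star)
  obtain ⟨b, hab⟩ := exists_sum_tmul_eq_sum_tmul_of_mem_span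
    (fun i ↦ ha_span ▸ Submodule.subset_span ⟨i, rfl⟩ :
      ∀ i, e i ∈ Submodule.span ℂ (Set.range a)) f
  have hb_star : (fun i ↦ star (b i)) = b := by
    apply sum_tmul_left_injective (R := ℂ) ha
    simpa only [hab, star_sum, TensorProduct.star_tmul, (ha_sa _).star_eq] using ht.star_eq
  have hf_le : Submodule.span ℂ (Set.range f) ≤ Submodule.span ℂ (Set.range b) := by
    rw [Submodule.span_le]
    rintro _ ⟨i, rfl⟩
    exact mem_span_right_of_sum_tmul_eq he hab i
  have hb : LinearIndependent ℂ b := by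
    rw [linearIndependent_iff_card_le_finrank_span, ← finrank_span_eq_card hf]
    have := FiniteDimensional.span_of_finite ℂ (Set.finite_range b)
    exact Submodule.finrank_mono hf_le
  exact ⟨a, b, ha_sa, congrFun hb_star, hab, ha, hb⟩

end ComplexStarModule

section ElementaryOperator

variable {l m n o p q R : Type*} [Fintype m] [Fintype n] [Fintype p] [Fintype q]
  [CommSemiring R]

/-- The elementary operator `X ↦ ∑ⱼ Eⱼ * X * Fⱼ` attached to the tensor `∑ⱼ Eⱼ ⊗ₜ Fⱼ`. Taking the
tensor as the argument makes the operator independent of how the coefficients are presented. -/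
def elementaryOperator :
    Matrix l m R ⊗[R] Matrix n o R →ₗ[R] Matrix m n R →ₗ[R] Matrix l o R :=
  TensorProduct.lift <| LinearMap.mk₂ R
    (fun A B ↦ mulRightLinearMap l R B ∘ₗ mulLeftLinearMap n R A)
    (fun A A' B ↦ by ext1 X; simp [Matrix.add_mul])
    (fun c A B ↦ by ext1 X; simp)
    (fun A B B' ↦ by ext1 X; simp [Matrix.mul_add])
    (fun c A B ↦ by ext1 X; simp)

lemma elementaryOperator_tmul (A : Matrix l m R) (B : Matrix n o R)
    (X : Matrix m n R) : elementaryOperator (A ⊗ₜ[R] B) X = A * X * B :=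
  rfl

lemma elementaryOperator_sum_tmul {ι : Type*} [Fintype ι]
    (E : ι → Matrix l m R) (F : ι → Matrix n o R) (X : Matrix m n R) :
    elementaryOperator (∑ i, E i ⊗ₜ[R] F i) X = ∑ i, E i * X * F i := by
  simp only [map_sum, LinearMap.sum_apply, elementaryOperator_tmul]

lemma elementaryOperator_single_apply [Fintype l] [Fintype o] [DecidableEq l] [DecidableEq m]
    [DecidableEq n] [DecidableEq o]
    (t : Matrix l m R ⊗[R] Matrix n o R) (a : l) (b : m) (c : n) (d : o) :
    elementaryOperator t (single b c 1) a d = kroneckerLinearEquiv l m n o R t (a, c) (b, d) := by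
  induction t using TensorProduct.induction_on with
  | zero => simp
  | tmul A B => simp [elementaryOperator_tmul, Matrix.mul_apply, single_apply, ite_and]
  | add t t' ht ht' => simp [ht, ht']

lemma elementaryOperator_injective [Finite l] [Finite o] :
    Function.Injective (elementaryOperator : Matrix l m R ⊗[R] Matrix n o R →ₗ[R] _) := by
  classical
  cases nonempty_fintype l
  cases nonempty_fintype o
  intro t t' h
  apply (kroneckerLinearEquiv l m n o R).injective
  ext ⟨a, c⟩ ⟨b, d⟩
  rw [← elementaryOperator_single_apply, ← elementaryOperator_single_apply, h]

variable [StarRing R]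

lemma trace_conjTranspose_elementaryOperator_mul (t : Matrix p p R ⊗[R] Matrix q q R)
    (X Y : Matrix p q R) :
    trace ((elementaryOperator t Y)ᴴ * X) = trace (Yᴴ * elementaryOperator (star t) X) := by
  induction t using TensorProduct.induction_on with
  | zero => simp
  | tmul A B =>
    calc trace ((A * Y * B)ᴴ * X) = trace (Bᴴ * (Yᴴ * Aᴴ * X)) := by
          simp only [conjTranspose_mul, Matrix.mul_assoc]
      _ = trace (Yᴴ * Aᴴ * X * Bᴴ) := trace_mul_comm _ _
      _ = trace (Yᴴ * (Aᴴ * X * Bᴴ)) := by simp only [Matrix.mul_assoc]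
  | add t t' ht ht' =>
    simp only [map_add, star_add, LinearMap.add_apply, conjTranspose_add, Matrix.add_mul,
      Matrix.mul_add, trace_add, ht, ht']

lemma isSelfAdjoint_iff_trace_conjTranspose_mul_elementaryOperator
    (t : Matrix p p R ⊗[R] Matrix q q R) :
    IsSelfAdjoint t ↔ ∀ X Y : Matrix p q R,
      trace (Yᴴ * elementaryOperator t X) = trace ((elementaryOperator t Y)ᴴ * X) := by
  simp only [trace_conjTranspose_elementaryOperator_mul]
  refine ⟨fun ht X Y ↦ by rw [ht.star_eq], fun h ↦ elementaryOperator_injective ?_⟩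
  ext1 X
  refine ext_iff_trace_mul_left.2 fun Z ↦ ?_
  simpa only [conjTranspose_conjTranspose] using (h X Zᴴ).symm

end ElementaryOperator

theorem selfadjoint_hermitian_decomposition_general {ι p q : Type*} [Fintype ι] [Fintype p]
    [Fintype q] (E : ι → Matrix p p ℂ) (F : ι → Matrix q q ℂ)
    (hE : LinearIndependent ℂ E) (hF : LinearIndependent ℂ F)
    (h : ∀ X Y : Matrix p q ℂ,
      trace (Yᴴ * ∑ j, E j * X * F j) = trace ((∑ j, E j * Y * F j)ᴴ * X)) :
    ∃ (A : ι → Matrix p p ℂ) (B : ι → Matrix q q ℂ),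
      (∀ j, (A j).IsHermitian) ∧ (∀ j, (B j).IsHermitian) ∧
      (∀ X : Matrix p q ℂ, ∑ j, E j * X * F j = ∑ j, A j * X * B j) ∧
      LinearIndependent ℂ A ∧ LinearIndependent ℂ B := by
  have ht : IsSelfAdjoint (∑ j, E j ⊗ₜ[ℂ] F j) := by
    rw [isSelfAdjoint_iff_trace_conjTranspose_mul_elementaryOperator]
    simpa only [elementaryOperator_sum_tmul] using h
  obtain ⟨A, B, hA, hB, hAB, hA_indep, hB_indep⟩ := exists_isSelfAdjoint_sum_tmul_eq hE hF ht
  refine ⟨A, B, hA, hB, fun X ↦ ?_, hA_indep, hB_indep⟩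
  rw [← elementaryOperator_sum_tmul, hAB, elementaryOperator_sum_tmul]

/-- If `𝒜(X) = ∑ⱼ Eⱼ X Fⱼ` with `{E₁,…,Eₘ}` and `{F₁,…,Fₘ}` linearly independent,
and `𝒜` is self-adjoint for the Frobenius inner product, then there exist Hermitian
matrices `Aⱼ, Bⱼ` with `𝒜(X) = ∑ⱼ Aⱼ X Bⱼ`, and moreover `{A₁,…,Aₘ}` and
`{B₁,…,Bₘ}` are linearly independent. -/
theorem selfadjoint_hermitian_decomposition {n m : ℕ}
    (E F : Fin m → Matrix (Fin n) (Fin n) ℂ)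
    (hE : LinearIndependent ℂ E) (hF : LinearIndependent ℂ F)
    (h : ∀ X Y : Matrix (Fin n) (Fin n) ℂ,
      Matrix.trace (Yᴴ * ∑ j, E j * X * F j)
        = Matrix.trace ((∑ j, E j * Y * F j)ᴴ * X)) :
    ∃ A B : Fin m → Matrix (Fin n) (Fin n) ℂ,
      (∀ j, (A j).IsHermitian) ∧ (∀ j, (B j).IsHermitian) ∧
      (∀ X : Matrix (Fin n) (Fin n) ℂ, ∑ j, E j * X * F j = ∑ j, A j * X * B j) ∧
      LinearIndependent ℂ A ∧ LinearIndependent ℂ B :=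
  selfadjoint_hermitian_decomposition_general E F hE hF h
end

section
/- Let 𝒜 : M_n(ℂ) → M_n(ℂ) be given by 𝒜(X) = A X B with A, B ∈ M_n(ℂ) Hermitian. If ⟨𝒜(X), X⟩ > 0 for all nonzero X ∈ M_n(ℂ) (Frobenius inner product), then there exist positive matrices A', B' ∈ M_n(ℂ) such that 𝒜(X) = A' X B' for all X ∈ M_n(ℂ). -/
open Matrix ComplexOrder

/-!
On a rank-one matrix `X = x yᴴ` the form `⟨A X B, X⟩` factors as `(xᴴ A x) (yᴴ B y)`. If all these
products are positive, then rescaling `A` by `c = y₀ᴴ B y₀`, for a fixed `y₀ ≠ 0`, and `B` by `c⁻¹`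
makes both quadratic forms positive without changing `A X B`. Over `ℂ` a matrix whose quadratic form
is real-valued is Hermitian, so both rescaled matrices are positive definite.
-/

theorem exists_ne_zero_forall_pos_of_forall_mul_pos {α β K : Type*} [Field K] [PartialOrder K]
    [PosMulReflectLT K] {s : Set α} {t : Set β} {f : α → K} {g : β → K} (hs : s.Nonempty)
    (ht : t.Nonempty) (hfg : ∀ a ∈ s, ∀ b ∈ t, 0 < f a * g b) :
    ∃ c ≠ 0, (∀ a ∈ s, 0 < c * f a) ∧ ∀ b ∈ t, 0 < c⁻¹ * g b := by
  obtain ⟨a₀, ha₀⟩ := hs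
  obtain ⟨b₀, hb₀⟩ := ht
  have hpos₀ : 0 < f a₀ * g b₀ := hfg a₀ ha₀ b₀ hb₀
  refine ⟨g b₀, right_ne_zero_of_mul hpos₀.ne', fun a ha ↦ ?_, fun b hb ↦ ?_⟩
  · simpa only [mul_comm] using hfg a ha b₀ hb₀
  · calc
      0 < (f a₀ * g b) / (f a₀ * g b₀) := div_pos (hfg a₀ ha₀ b hb) hpos₀
      _ = (g b₀)⁻¹ * g b := by
        rw [mul_div_mul_left _ _ (left_ne_zero_of_mul hpos₀.ne'), div_eq_inv_mul]

section

variable {m n : Type*}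

theorem vecMulVec_ne_zero_of_ne_zero {R : Type*} [Mul R] [Zero R] [NoZeroDivisors R]
    {x : m → R} {y : n → R} (hx : x ≠ 0) (hy : y ≠ 0) : vecMulVec x y ≠ 0 := by
  obtain ⟨i, hi⟩ := Function.ne_iff.mp hx
  obtain ⟨j, hj⟩ := Function.ne_iff.mp hy
  exact fun h ↦ mul_ne_zero hi hj (congrFun₂ h i j)

variable [Fintype m] [Fintype n]

theorem trace_conjTranspose_vecMulVec_mul_mul_vecMulVec_mul {R : Type*} [CommSemiring R]
    [StarRing R] (A : Matrix m m R) (B : Matrix n n R) (x : m → R) (y : n → R) :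
    trace ((vecMulVec x (star y))ᴴ * (A * vecMulVec x (star y) * B)) =
      (star x ⬝ᵥ A *ᵥ x) * (star y ⬝ᵥ B *ᵥ y) := by
  rw [conjTranspose_vecMulVec, star_star, mul_vecMulVec, vecMulVec_mul (A *ᵥ x),
    vecMulVec_mul_vecMulVec, trace_vecMulVec, dotProduct_smul, smul_eq_mul, dotProduct_comm y,
    ← dotProduct_mulVec]

theorem isHermitian_iff_im_star_dotProduct_mulVec_self {A : Matrix n n ℂ} :
    A.IsHermitian ↔ ∀ x, (star x ⬝ᵥ A *ᵥ x).im = 0 := by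
  classical
  refine ⟨fun hA ↦ hA.im_star_dotProduct_mulVec_self, fun h ↦ ?_⟩
  rw [← isSymmetric_toEuclideanLin_iff, LinearMap.isSymmetric_iff_inner_map_self_real]
  intro x
  rw [Complex.conj_eq_iff_im, ← inner_conj_symm, Complex.conj_im, neg_eq_zero]
  simpa [EuclideanSpace.inner_eq_star_dotProduct, dotProduct_comm] using h x.ofLp

theorem posDef_of_forall_star_dotProduct_mulVec_pos {A : Matrix n n ℂ}
    (h : ∀ x ≠ 0, 0 < star x ⬝ᵥ A *ᵥ x) : A.PosDef := by
  refine .of_dotProduct_mulVec_pos (isHermitian_iff_im_star_dotProduct_mulVec_self.mpr fun x ↦ ?_) h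
  obtain rfl | hx := eq_or_ne x 0
  · simp
  · exact (Complex.pos_iff.mp (h x hx)).2.symm

theorem one_summand_positive_general (A : Matrix m m ℂ) (B : Matrix n n ℂ)
    (h : ∀ X : Matrix m n ℂ, X ≠ 0 → 0 < trace (Xᴴ * (A * X * B))) :
    ∃ (A' : Matrix m m ℂ) (B' : Matrix n n ℂ), A'.PosDef ∧ B'.PosDef ∧
      ∀ X : Matrix m n ℂ, A * X * B = A' * X * B' := by
  classical
  cases isEmpty_or_nonempty m
  · exact ⟨1, 1, .one, .one, fun _ ↦ Subsingleton.elim _ _⟩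
  cases isEmpty_or_nonempty n
  · exact ⟨1, 1, .one, .one, fun _ ↦ Subsingleton.elim _ _⟩
  have forms_mul_pos (x : m → ℂ) (hx : x ≠ 0) (y : n → ℂ) (hy : y ≠ 0) :
      0 < (star x ⬝ᵥ A *ᵥ x) * (star y ⬝ᵥ B *ᵥ y) := by
    rw [← trace_conjTranspose_vecMulVec_mul_mul_vecMulVec_mul]
    exact h _ (vecMulVec_ne_zero_of_ne_zero hx (star_ne_zero.mpr hy))
  obtain ⟨c, hc, hA, hB⟩ :=
    exists_ne_zero_forall_pos_of_forall_mul_pos (s := {0}ᶜ) (t := {0}ᶜ) (exists_ne 0) (exists_ne 0)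
      forms_mul_pos
  refine ⟨c • A, c⁻¹ • B, posDef_of_forall_star_dotProduct_mulVec_pos fun x hx ↦ ?_,
    posDef_of_forall_star_dotProduct_mulVec_pos fun y hy ↦ ?_, fun X ↦ ?_⟩
  · simpa only [smul_mulVec, dotProduct_smul, smul_eq_mul] using hA x hx
  · simpa only [smul_mulVec, dotProduct_smul, smul_eq_mul] using hB y hy
  · rw [Matrix.smul_mul, Matrix.smul_mul, Matrix.mul_smul, smul_inv_smul₀ hc]

end

/-- If `𝒜(X) = A X B` with `A, B` Hermitian and `⟨𝒜(X), X⟩ = trace(Xᴴ A X B)` is a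
positive real for every nonzero `X`, then there exist positive matrices `A', B'`
with `A X B = A' X B'` for all `X`. -/
theorem one_summand_positive {n : ℕ}
    (A B : Matrix (Fin n) (Fin n) ℂ)
    (hA : A.IsHermitian) (hB : B.IsHermitian)
    (h : ∀ X : Matrix (Fin n) (Fin n) ℂ, X ≠ 0 →
      (Matrix.trace (Xᴴ * (A * X * B))).im = 0 ∧
      0 < (Matrix.trace (Xᴴ * (A * X * B))).re) :
    ∃ A' B' : Matrix (Fin n) (Fin n) ℂ, A'.PosDef ∧ B'.PosDef ∧
      ∀ X : Matrix (Fin n) (Fin n) ℂ, A * X * B = A' * X * B' :=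
  one_summand_positive_general A B fun X hX ↦
    Complex.pos_iff.mpr ⟨(h X hX).2, (h X hX).1.symm⟩
end

section
/- Let 𝒜 : M_n(ℂ) → M_n(ℂ) be given by 𝒜(X) = A_1 X B_1 + A_2 X B_2 with A_1, A_2, B_1, B_2 ∈ M_n(ℂ) Hermitian. If ⟨𝒜(X), X⟩ > 0 for all nonzero X ∈ M_n(ℂ) (Frobenius inner product), then there exist positive matrices A_1', A_2', B_1', B_2' ∈ M_n(ℂ) such that 𝒜(X) = A_1' X B_1' + A_2' X B_2' for all X ∈ M_n(ℂ). -/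
open Matrix ComplexOrder

/-! Evaluated at `X = x y*`, the form `⟨𝒜(X), X⟩` is the pairing of the plane vectors
`(⟨A₁x, x⟩, ⟨A₂x, x⟩)` and `(⟨B₁y, y⟩, ⟨B₂y, y⟩)`. As `x` and `y` run over the unit spheres, these
vectors sweep out two compact sets `K` and `L` with positive pairings, so `K` lies in the interior
of the dual cone of `L`. Since the cones are planar, a cone spanned by two vectors fits in between:
in the basis of these vectors `K` has positive coordinates, and in the dual basis so has `L`.
Rewriting `A₁ ⊗ B₁ + A₂ ⊗ B₂` in this pair of dual bases makes all four factors positive. -/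

open Topology

section Plane

variable {α β : Type*} [TopologicalSpace α] [CompactSpace α] [Nonempty α]
  [TopologicalSpace β] [CompactSpace β]

theorem exists_lt_mul_and_add_mul_pos {f₁ f₂ : α → ℝ} {g₁ g₂ : β → ℝ}
    (hf₁ : Continuous f₁) (hf₂ : Continuous f₂) (hg₁ : Continuous g₁) (hg₂ : Continuous g₂)
    (hpos : ∀ x, 0 < f₁ x) (h : ∀ x y, 0 < f₁ x * g₁ y + f₂ x * g₂ y) :
    ∃ q : ℝ, (∀ x, f₂ x < q * f₁ x) ∧ ∀ y, 0 < g₁ y + q * g₂ y := by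
  have hratio : Continuous fun x ↦ f₂ x / f₁ x := hf₂.div hf₁ fun x ↦ (hpos x).ne'
  obtain ⟨x₀, -, hmax⟩ := isCompact_univ.exists_isMaxOn Set.univ_nonempty hratio.continuousOn
  have hx₀ (y : β) : 0 < g₁ y + f₂ x₀ / f₁ x₀ * g₂ y := by
    have hfactor : f₁ x₀ * (g₁ y + f₂ x₀ / f₁ x₀ * g₂ y) = f₁ x₀ * g₁ y + f₂ x₀ * g₂ y := by
      rw [mul_add, ← mul_assoc, mul_div_cancel₀ _ (hpos x₀).ne']
    exact pos_of_mul_pos_right (hfactor ▸ h x₀ y) (hpos x₀).le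
  have hnear : ∀ᶠ q in 𝓝 (f₂ x₀ / f₁ x₀), ∀ y ∈ Set.univ, 0 < g₁ y + q * g₂ y :=
    isCompact_univ.eventually_forall_of_forall_eventually fun y _ ↦
      ContinuousAt.eventually_lt (by fun_prop) (by fun_prop) (hx₀ y)
  -- A slope slightly beyond the maximal ratio makes the first inequality strict.
  obtain ⟨q, hq, hqpos⟩ := hnear.exists_gt
  exact ⟨q, fun x ↦ (div_lt_iff₀ (hpos x)).1 ((hmax (Set.mem_univ x)).trans_lt hq),
    fun y ↦ hqpos y (Set.mem_univ y)⟩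

theorem exists_dual_mulVec_pos_of_zero_pos {f : α → Fin 2 → ℝ} {g : β → Fin 2 → ℝ}
    (hf : Continuous f) (hg : Continuous g) (hpos : ∀ x, 0 < f x 0)
    (h : ∀ x y, 0 < f x ⬝ᵥ g y) :
    ∃ M N : Matrix (Fin 2) (Fin 2) ℝ, Mᵀ * N = 1 ∧
      (∀ x i, 0 < (M *ᵥ f x) i) ∧ ∀ y i, 0 < (N *ᵥ g y) i := by
  simp only [dotProduct, Fin.sum_univ_two] at h
  have ⟨hf₀, hf₁⟩ := Fin.forall_fin_two.1 (continuous_pi_iff.1 hf)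
  have ⟨hg₀, hg₁⟩ := Fin.forall_fin_two.1 (continuous_pi_iff.1 hg)
  obtain ⟨q, hfq, hgq⟩ := exists_lt_mul_and_add_mul_pos hf₀ hf₁ hg₀ hg₁ hpos h
  obtain ⟨p, hfp, hgp⟩ := exists_lt_mul_and_add_mul_pos (f₂ := fun x ↦ -f x 1)
    (g₂ := fun y ↦ -g y 1) hf₀ hf₁.neg hg₀ hg₁.neg hpos
    fun x y ↦ by simpa only [neg_mul_neg] using h x y
  have hqp : 0 < q + p := by
    obtain ⟨x⟩ := ‹Nonempty α›
    exact pos_of_mul_pos_left (by linarith [hfq x, hfp x]) (hpos x).le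
  refine ⟨!![q, -1; p, 1], (q + p)⁻¹ • !![1, -p; 1, q], ?_, fun x ↦ ?_, fun y ↦ ?_⟩
  · rw [mul_smul_comm, inv_smul_eq_iff₀ hqp.ne']
    ext i j
    fin_cases i <;> fin_cases j <;> simp [Matrix.mul_apply, Fin.sum_univ_two] <;> ring
  · simp only [Fin.forall_fin_two, mulVec, dotProduct, Fin.sum_univ_two, of_apply, cons_val_zero,
      cons_val_one]
    constructor <;> linarith [hfq x, hfp x]
  · simp only [smul_mulVec, Pi.smul_apply, smul_eq_mul, mul_pos_iff_of_pos_left (inv_pos.2 hqp)]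
    simp only [Fin.forall_fin_two, mulVec, dotProduct, Fin.sum_univ_two, of_apply, cons_val_zero,
      cons_val_one]
    constructor <;> linarith [hgq y, hgp y]

theorem exists_dual_mulVec_pos [Nonempty β] {f : α → Fin 2 → ℝ} {g : β → Fin 2 → ℝ}
    (hf : Continuous f) (hg : Continuous g) (h : ∀ x y, 0 < f x ⬝ᵥ g y) :
    ∃ M N : Matrix (Fin 2) (Fin 2) ℝ, Mᵀ * N = 1 ∧
      (∀ x i, 0 < (M *ᵥ f x) i) ∧ ∀ y i, 0 < (N *ᵥ g y) i := by
  obtain ⟨y₀⟩ := ‹Nonempty β›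
  set b := g y₀ 0
  set c := g y₀ 1
  have hrow (x : α) : 0 < b * f x 0 + c * f x 1 := by
    simpa only [dotProduct, Fin.sum_univ_two, mul_comm] using h x y₀
  have hbc : b * b + c * c ≠ 0 := by
    obtain ⟨x⟩ := ‹Nonempty α›
    intro hzero
    obtain ⟨hb, hc⟩ := mul_self_add_mul_self_eq_zero.1 hzero
    simpa [hb, hc] using hrow x
  -- `R` turns `g y₀` onto the first axis, so the first coordinate of `R *ᵥ f x` is positive.
  let R : Matrix (Fin 2) (Fin 2) ℝ := !![b, c; -c, b]
  let S : Matrix (Fin 2) (Fin 2) ℝ := (b * b + c * c)⁻¹ • R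
  have hRS : Rᵀ * S = 1 := by
    rw [mul_smul_comm, inv_smul_eq_iff₀ hbc]
    ext i j
    fin_cases i <;> fin_cases j <;> simp [R, Matrix.mul_apply, Fin.sum_univ_two] <;> ring
  have hpairing (x : α) (y : β) : R *ᵥ f x ⬝ᵥ S *ᵥ g y = f x ⬝ᵥ g y := by
    rw [← vecMul_transpose, ← dotProduct_mulVec, mulVec_mulVec, hRS, one_mulVec]
  obtain ⟨M, N, hMN, hM, hN⟩ := exists_dual_mulVec_pos_of_zero_pos
    (f := fun x ↦ R *ᵥ f x) (g := fun y ↦ S *ᵥ g y) (by fun_prop) (by fun_prop)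
    (fun x ↦ by simpa [R, mulVec, dotProduct, Fin.sum_univ_two] using hrow x)
    fun x y ↦ (hpairing x y).symm ▸ h x y
  refine ⟨M * R, N * S, ?_, by simpa only [mulVec_mulVec] using hM,
    by simpa only [mulVec_mulVec] using hN⟩
  rw [transpose_mul, Matrix.mul_assoc, ← Matrix.mul_assoc Mᵀ, hMN, Matrix.one_mul, hRS]

end Plane

theorem sum_smul_mul_mul_sum_smul {ι κ m n R S : Type*} [Fintype ι] [DecidableEq ι] [Fintype κ]
    [Fintype m] [Fintype n] [CommSemiring R] [Semiring S] [Algebra R S] {M N : Matrix κ ι R}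
    (hMN : Mᵀ * N = 1) (A : ι → Matrix m m S) (B : ι → Matrix n n S) (X : Matrix m n S) :
    ∑ k, (∑ i, M k i • A i) * X * (∑ i, N k i • B i) = ∑ i, A i * X * B i := by
  have hcoeff (i j : ι) : ∑ k, M k i * N k j = if i = j then 1 else 0 := by
    rw [← one_apply, ← hMN]
    rfl
  calc ∑ k, (∑ i, M k i • A i) * X * (∑ j, N k j • B j)
      = ∑ k, ∑ i, ∑ j, (M k i * N k j) • (A i * X * B j) := by
        simp only [Matrix.sum_mul, Matrix.mul_sum, Matrix.smul_mul, Matrix.mul_smul, smul_smul,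
          Finset.smul_sum]
        exact Finset.sum_congr rfl fun k _ ↦ Finset.sum_comm.trans <| by simp only [mul_comm]
    _ = ∑ i, ∑ j, (∑ k, M k i * N k j) • (A i * X * B j) := by
        simp only [Finset.sum_smul]
        rw [Finset.sum_comm]
        exact Finset.sum_congr rfl fun i _ ↦ Finset.sum_comm
    _ = ∑ i, A i * X * B i := by simp [hcoeff]

theorem vecMulVec_ne_zero_of_ne_zero_s12 {m n R : Type*} [MulZeroClass R] [NoZeroDivisors R]
    {v : m → R} {w : n → R} (hv : v ≠ 0) (hw : w ≠ 0) : vecMulVec v w ≠ 0 := by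
  obtain ⟨i, hi⟩ := Function.ne_iff.1 hv
  obtain ⟨j, hj⟩ := Function.ne_iff.1 hw
  exact fun hzero ↦ mul_ne_zero hi hj (congrFun₂ hzero i j)

section QuadForm

variable {𝕜 m n : Type*} [RCLike 𝕜] [Fintype m] [Fintype n]

/-- The real quadratic form `x ↦ re (x* A x)` of a square matrix `A`. For Hermitian `A` the real
part loses nothing. -/
noncomputable def reQuadForm (A : Matrix n n 𝕜) (x : n → 𝕜) : ℝ :=
  RCLike.re (star x ⬝ᵥ A *ᵥ x)

@[fun_prop]
theorem continuous_reQuadForm (A : Matrix n n 𝕜) : Continuous (reQuadForm A) := by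
  unfold reQuadForm
  fun_prop

theorem reQuadForm_smul (A : Matrix n n 𝕜) (c : ℝ) (x : n → 𝕜) :
    reQuadForm A (c • x) = c ^ 2 * reQuadForm A x := by
  have hstar : star (c • x) = c • star x := by ext; simp
  simp only [reQuadForm, hstar, mulVec_smul, dotProduct_smul, smul_dotProduct, RCLike.smul_re]
  ring

theorem reQuadForm_sum_smul {ι : Type*} [Fintype ι] (c : ι → ℝ) (A : ι → Matrix n n 𝕜)
    (x : n → 𝕜) : reQuadForm (∑ i, c i • A i) x = c ⬝ᵥ fun i ↦ reQuadForm (A i) x := by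
  simp only [reQuadForm, sum_mulVec, dotProduct_sum, smul_mulVec, dotProduct_smul, map_sum,
    RCLike.smul_re]
  rfl

theorem coe_reQuadForm {A : Matrix n n 𝕜} (hA : A.IsHermitian) (x : n → 𝕜) :
    (reQuadForm A x : 𝕜) = star x ⬝ᵥ A *ᵥ x := by
  apply RCLike.ext <;> simp [reQuadForm, hA.im_star_dotProduct_mulVec_self]

theorem posDef_of_reQuadForm_pos_on_sphere {A : Matrix n n 𝕜} (hA : A.IsHermitian)
    (h : ∀ x : Metric.sphere (0 : n → 𝕜) 1, 0 < reQuadForm A x) : A.PosDef := by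
  refine .of_dotProduct_mulVec_pos hA fun x hx ↦ ?_
  have hnorm : 0 < ‖x‖ := norm_pos_iff.2 hx
  have hunit : ‖x‖⁻¹ • x ∈ Metric.sphere (0 : n → 𝕜) 1 := by simp [norm_smul, hnorm.ne']
  have hscaled : 0 < ‖x‖⁻¹ ^ 2 * reQuadForm A x := reQuadForm_smul A _ x ▸ h ⟨_, hunit⟩
  rw [← coe_reQuadForm hA]
  exact_mod_cast pos_of_mul_pos_right hscaled (by positivity)

theorem posDef_sum_smul {ι : Type*} [Fintype ι] {A : ι → Matrix n n 𝕜}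
    (hA : ∀ i, (A i).IsHermitian) {c : ι → ℝ}
    (h : ∀ x : Metric.sphere (0 : n → 𝕜) 1, 0 < c ⬝ᵥ fun i ↦ reQuadForm (A i) x) :
    (∑ i, c i • A i).PosDef :=
  posDef_of_reQuadForm_pos_on_sphere
    (isSelfAdjoint_sum _ fun i _ ↦ (hA i).smul (.all (c i)))
    fun x ↦ (reQuadForm_sum_smul c A x).symm ▸ h x

theorem trace_conjTranspose_vecMulVec_mul (A : Matrix m m 𝕜) (B : Matrix n n 𝕜) (x : m → 𝕜)
    (y : n → 𝕜) :
    trace ((vecMulVec x (star y))ᴴ * (A * vecMulVec x (star y) * B)) =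
      (star x ⬝ᵥ A *ᵥ x) * (star y ⬝ᵥ B *ᵥ y) := by
  rw [conjTranspose_vecMulVec, star_star, mul_vecMulVec, vecMulVec_mul _ _ B,
    vecMulVec_mul_vecMulVec, trace_vecMulVec, dotProduct_smul, dotProduct_comm y,
    ← dotProduct_mulVec, smul_eq_mul]

theorem re_trace_conjTranspose_vecMulVec_mul_sum {ι : Type*} [Fintype ι] {A : ι → Matrix m m 𝕜}
    {B : ι → Matrix n n 𝕜} (hA : ∀ i, (A i).IsHermitian) (hB : ∀ i, (B i).IsHermitian)
    (x : m → 𝕜) (y : n → 𝕜) :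
    RCLike.re (trace ((vecMulVec x (star y))ᴴ * ∑ i, A i * vecMulVec x (star y) * B i)) =
      (fun i ↦ reQuadForm (A i) x) ⬝ᵥ fun i ↦ reQuadForm (B i) y := by
  simp only [Matrix.mul_sum, trace_sum, map_sum, trace_conjTranspose_vecMulVec_mul,
    ← coe_reQuadForm (hA _), ← coe_reQuadForm (hB _), ← RCLike.ofReal_mul, RCLike.ofReal_re]
  rfl

theorem exists_posDef_sum_mul_mul_eq [Nonempty m] [Nonempty n] {A : Fin 2 → Matrix m m 𝕜}
    {B : Fin 2 → Matrix n n 𝕜} (hA : ∀ i, (A i).IsHermitian) (hB : ∀ i, (B i).IsHermitian)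
    (h : ∀ x y, x ≠ 0 → y ≠ 0 →
      0 < (fun i ↦ reQuadForm (A i) x) ⬝ᵥ fun i ↦ reQuadForm (B i) y) :
    ∃ (A' : Fin 2 → Matrix m m 𝕜) (B' : Fin 2 → Matrix n n 𝕜),
      (∀ i, (A' i).PosDef) ∧ (∀ i, (B' i).PosDef) ∧
      ∀ X : Matrix m n 𝕜, ∑ i, A i * X * B i = ∑ i, A' i * X * B' i := by
  have := (NormedSpace.sphere_nonempty (x := (0 : m → 𝕜)).2 zero_le_one).to_subtype
  have := (NormedSpace.sphere_nonempty (x := (0 : n → 𝕜)).2 zero_le_one).to_subtype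
  obtain ⟨M, N, hMN, hM, hN⟩ := exists_dual_mulVec_pos
    (f := fun (x : Metric.sphere (0 : m → 𝕜) 1) i ↦ reQuadForm (A i) x)
    (g := fun (y : Metric.sphere (0 : n → 𝕜) 1) i ↦ reQuadForm (B i) y)
    (by fun_prop) (by fun_prop)
    fun x y ↦ h x y (ne_zero_of_mem_unit_sphere x) (ne_zero_of_mem_unit_sphere y)
  exact ⟨fun k ↦ ∑ i, M k i • A i, fun k ↦ ∑ i, N k i • B i,
    fun k ↦ posDef_sum_smul hA (hM · k), fun k ↦ posDef_sum_smul hB (hN · k),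
    fun X ↦ (sum_smul_mul_mul_sum_smul hMN A B X).symm⟩

theorem two_summands_positive_general {A₁ A₂ : Matrix m m 𝕜} {B₁ B₂ : Matrix n n 𝕜}
    (hA₁ : A₁.IsHermitian) (hA₂ : A₂.IsHermitian)
    (hB₁ : B₁.IsHermitian) (hB₂ : B₂.IsHermitian)
    (h : ∀ X : Matrix m n 𝕜, X ≠ 0 → X.rank ≤ 1 →
      0 < RCLike.re (trace (Xᴴ * (A₁ * X * B₁ + A₂ * X * B₂)))) :
    ∃ (A₁' A₂' : Matrix m m 𝕜) (B₁' B₂' : Matrix n n 𝕜),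
      A₁'.PosDef ∧ A₂'.PosDef ∧ B₁'.PosDef ∧ B₂'.PosDef ∧
      ∀ X : Matrix m n 𝕜, A₁ * X * B₁ + A₂ * X * B₂ = A₁' * X * B₁' + A₂' * X * B₂' := by
  classical
  by_cases hempty : IsEmpty m ∨ IsEmpty n
  · refine ⟨1, 1, 1, 1, .one, .one, .one, .one, fun X ↦ ?_⟩
    rcases hempty with _ | _ <;> exact Subsingleton.elim _ _
  obtain ⟨_, _⟩ : Nonempty m ∧ Nonempty n := by simpa using hempty
  have hA (i) : (![A₁, A₂] i).IsHermitian := by fin_cases i <;> assumption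
  have hB (i) : (![B₁, B₂] i).IsHermitian := by fin_cases i <;> assumption
  obtain ⟨A', B', hA', hB', heq⟩ := exists_posDef_sum_mul_mul_eq hA hB fun x y hx hy ↦ by
    rw [← re_trace_conjTranspose_vecMulVec_mul_sum hA hB, Fin.sum_univ_two]
    exact h _ (vecMulVec_ne_zero_of_ne_zero_s12 hx (star_ne_zero.2 hy)) (rank_vecMulVec_le _ _)
  simp only [Fin.sum_univ_two] at heq
  exact ⟨A' 0, A' 1, B' 0, B' 1, hA' 0, hA' 1, hB' 0, hB' 1, heq⟩

end QuadForm

/-- If `𝒜(X) = A₁ X B₁ + A₂ X B₂` with `A₁, A₂, B₁, B₂` Hermitian and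
`⟨𝒜(X), X⟩ > 0` for all nonzero `X` (Frobenius inner product), then there exist
positive matrices `A₁', A₂', B₁', B₂'` with
`𝒜(X) = A₁' X B₁' + A₂' X B₂'` for all `X`. -/
theorem two_summands_positive {n : ℕ}
    (A₁ A₂ B₁ B₂ : Matrix (Fin n) (Fin n) ℂ)
    (hA₁ : A₁.IsHermitian) (hA₂ : A₂.IsHermitian)
    (hB₁ : B₁.IsHermitian) (hB₂ : B₂.IsHermitian)
    (h : ∀ X : Matrix (Fin n) (Fin n) ℂ, X ≠ 0 →
      (Matrix.trace (Xᴴ * (A₁ * X * B₁ + A₂ * X * B₂))).im = 0 ∧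
      0 < (Matrix.trace (Xᴴ * (A₁ * X * B₁ + A₂ * X * B₂))).re) :
    ∃ A₁' A₂' B₁' B₂' : Matrix (Fin n) (Fin n) ℂ,
      A₁'.PosDef ∧ A₂'.PosDef ∧ B₁'.PosDef ∧ B₂'.PosDef ∧
      ∀ X : Matrix (Fin n) (Fin n) ℂ,
        A₁ * X * B₁ + A₂ * X * B₂ = A₁' * X * B₁' + A₂' * X * B₂' :=
  two_summands_positive_general hA₁ hA₂ hB₁ hB₂ fun X hX _ ↦ (h X hX).2
end

section
/- Let 0 < ε < 1/2 and define 𝒜 : M_2(ℂ) → M_2(ℂ) by 𝒜([[x, y], [w, z]]) = [[x + (1−ε)z, εy], [εw, z + (1−ε)x]]. Then there do NOT exist m ∈ ℕ and positive matrices A_i, B_i ∈ M_2(ℂ), i = 1, …, m, such that 𝒜(X) = Σ_{i=1}^m A_i X B_i for all X ∈ M_2(ℂ). -/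
open Matrix ComplexOrder

/-- The Grinberg map `𝒜([[x, y], [w, z]]) = [[x + (1−ε)z, εy], [εw, z + (1−ε)x]]`. -/
def grinbergMap (ε : ℝ) (X : Matrix (Fin 2) (Fin 2) ℂ) : Matrix (Fin 2) (Fin 2) ℂ :=
  !![X 0 0 + (1 - (ε : ℂ)) * X 1 1, (ε : ℂ) * X 0 1;
     (ε : ℂ) * X 1 0, X 1 1 + (1 - (ε : ℂ)) * X 0 0]

/-!
If `A` and `B` are positive semidefinite, so is `A ⊗ₖ B`, whose entries `A i j * B k l` are the
entries of the images of the matrix units under `X ↦ A * X * B`. Testing `A ⊗ₖ B` on a difference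
of two basis vectors bounds two of these entries by two others, and the bound survives summation.
For a sum of such maps equal to the Grinberg map it reads `2 * (1 - ε) ≤ 2 * ε`.
-/

theorem posSemidef_apply_add_apply_swap_le {n R : Type*} [Ring R] [PartialOrder R]
    [AddLeftMono R] [StarRing R] {M : Matrix n n R} (hM : M.PosSemidef) (i j : n) :
    M i j + M j i ≤ M i i + M j j := by
  have form_eq : star ![1, -1] ⬝ᵥ (M.submatrix ![i, j] ![i, j] *ᵥ ![1, -1]) =
      M i i + M j j - (M i j + M j i) := by
    simp only [dotProduct, mulVec, Fin.sum_univ_two, Pi.star_apply, submatrix_apply,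
      cons_val_zero, cons_val_one, star_one, star_neg, one_mul, mul_one, neg_mul, mul_neg]
    abel
  rw [← sub_nonneg, ← form_eq]
  exact (hM.submatrix ![i, j]).dotProduct_mulVec_nonneg _

theorem mul_single_one_mul_apply {l m n o R : Type*} [Fintype m] [DecidableEq m] [Fintype n]
    [DecidableEq n] [NonAssocSemiring R] (A : Matrix l m R) (B : Matrix n o R) (i : l)
    (j : m) (k : n) (p : o) :
    (A * single j k (1 : R) * B) i p = A i j * B k p := by
  simp [mul_apply, single_apply, ite_and]

section RCLike

variable {𝕜 m n : Type*} [RCLike 𝕜]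

theorem posSemidef_mul_add_mul_swap_le [Finite m] [Finite n] {A : Matrix m m 𝕜}
    {B : Matrix n n 𝕜} (hA : A.PosSemidef) (hB : B.PosSemidef) (i j : m) (k l : n) :
    A i j * B k l + A j i * B l k ≤ A i i * B k k + A j j * B l l :=
  posSemidef_apply_add_apply_swap_le (hA.kronecker hB) (i, k) (j, l)

theorem apply_single_swap_le_of_eq_sum_mul_mul [Fintype m] [DecidableEq m] [Fintype n]
    [DecidableEq n] {ι : Type*} {s : Finset ι} {A : ι → Matrix m m 𝕜} {B : ι → Matrix n n 𝕜}
    {Φ : Matrix m n 𝕜 → Matrix m n 𝕜} (hA : ∀ a ∈ s, (A a).PosSemidef)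
    (hB : ∀ a ∈ s, (B a).PosSemidef) (hΦ : ∀ X, Φ X = ∑ a ∈ s, A a * X * B a)
    (i j : m) (k l : n) :
    Φ (single j k 1) i l + Φ (single i l 1) j k ≤
      Φ (single i k 1) i k + Φ (single j l 1) j l := by
  simp only [hΦ, Matrix.sum_apply, mul_single_one_mul_apply, ← Finset.sum_add_distrib]
  exact Finset.sum_le_sum fun a ha =>
    posSemidef_mul_add_mul_swap_le (hA a ha) (hB a ha) i j k l

end RCLike

theorem grinberg_not_positive_sum_general {ε : ℝ} (hε : ε < 1 / 2) {ι : Type*} (s : Finset ι)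
    {A B : ι → Matrix (Fin 2) (Fin 2) ℂ} (hA : ∀ a ∈ s, (A a).PosSemidef)
    (hB : ∀ a ∈ s, (B a).PosSemidef) :
    ¬ ∀ X : Matrix (Fin 2) (Fin 2) ℂ, grinbergMap ε X = ∑ a ∈ s, A a * X * B a := by
  intro h
  have entries_le : (1 - ε : ℂ) + (1 - ε) ≤ ε + ε := by
    simpa [grinbergMap] using apply_single_swap_le_of_eq_sum_mul_mul hA hB h 0 1 1 0
  norm_cast at entries_le
  linarith

/-- For `0 < ε < 1/2`, the Grinberg map cannot be written as `X ↦ ∑ᵢ Aᵢ X Bᵢ`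
with all `Aᵢ, Bᵢ ∈ M₂(ℂ)` positive. -/
theorem grinberg_not_positive_sum {ε : ℝ} (hε0 : 0 < ε) (hε : ε < 1 / 2) :
    ¬ ∃ (m : ℕ) (A B : Fin m → Matrix (Fin 2) (Fin 2) ℂ),
      (∀ i, (A i).PosDef) ∧ (∀ i, (B i).PosDef) ∧
      (∀ X : Matrix (Fin 2) (Fin 2) ℂ, grinbergMap ε X = ∑ i, A i * X * B i) := by
  rintro ⟨m, A, B, hA, hB, h⟩
  exact grinberg_not_positive_sum_general hε Finset.univ (fun i _ => (hA i).posSemidef)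
    (fun i _ => (hB i).posSemidef) h
end

section
/- Let m ≥ 2 and let 𝒜 : M_n(ℂ) → M_n(ℂ) be given by 𝒜(X) = −A_1 X B_1 + Σ_{i=2}^m A_i X B_i with all A_i, B_i ∈ M_n(ℂ) positive. If there exist positive real numbers ξ_k, k = 2, …, m, such that −A_1 + Σ_{k=2}^m ξ_k A_k is a positive matrix and B_k − ξ_k B_1 is a positive matrix for every k = 2, …, m, then there exist positive matrices A_i', B_i' ∈ M_n(ℂ), i = 1, …, m, such that 𝒜(X) = Σ_{i=1}^m A_i' X B_i' for all X ∈ M_n(ℂ). -/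
open Matrix ComplexOrder

/-!
The idea is a shear along `b`: replacing each `B i` by `B i - ξ i • b` costs
`ξ i • (A i * X * b)`, and the sum of these costs is absorbed by replacing `-a` with
`-a + ∑ ξ i • A i`. Applied with `a = A z` and `b = B z`, this removes the minus sign at `z`.
-/

theorem sum_update_mul_mul_update {ι R l m n o : Type*} [Fintype ι] [DecidableEq ι]
    [Fintype m] [Fintype n] [NonUnitalNonAssocSemiring R] (z : ι)
    (a : Matrix l m R) (b : Matrix n o R) (A : ι → Matrix l m R) (B : ι → Matrix n o R)
    (X : Matrix m n R) :
    ∑ i, Function.update A z a i * X * Function.update B z b i =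
      a * X * b + ∑ i ∈ Finset.univ.erase z, A i * X * B i := by
  rw [← Finset.add_sum_erase _ _ (Finset.mem_univ z), Function.update_self, Function.update_self]
  congr 1
  refine Finset.sum_congr rfl fun i hi => ?_
  have hiz : i ≠ z := Finset.ne_of_mem_erase hi
  rw [Function.update_of_ne hiz, Function.update_of_ne hiz]

section

variable {ι S R l m n o : Type*} [Fintype m] [Fintype n] [CommSemiring S] [Ring R] [Algebra S R]

theorem neg_mul_mul_add_sum_mul_mul_eq_add_sum_sub_smul (s : Finset ι)
    (a : Matrix l m R) (b : Matrix n o R) (A : ι → Matrix l m R) (B : ι → Matrix n o R)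
    (ξ : ι → S) (X : Matrix m n R) :
    -(a * X * b) + ∑ i ∈ s, A i * X * B i =
      (-a + ∑ i ∈ s, ξ i • A i) * X * b + ∑ i ∈ s, A i * X * (B i - ξ i • b) := by
  have absorbed : (-a + ∑ i ∈ s, ξ i • A i) * X * b =
      -(a * X * b) + ∑ i ∈ s, ξ i • (A i * X * b) := by
    simp only [Matrix.add_mul, Matrix.neg_mul, Matrix.sum_mul, Matrix.smul_mul]
  have shifted : ∑ i ∈ s, A i * X * (B i - ξ i • b) =
      ∑ i ∈ s, A i * X * B i - ∑ i ∈ s, ξ i • (A i * X * b) := by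
    simp only [Matrix.mul_sub, Matrix.mul_smul, Finset.sum_sub_distrib]
  rw [absorbed, shifted]
  abel

theorem remove_minus_sign_general [Fintype ι] [DecidableEq ι] [PartialOrder R] [StarRing R]
    (z : ι) (A : ι → Matrix m m R) (B : ι → Matrix n n R) (ξ : ι → S)
    (hA : ∀ i ≠ z, (A i).PosDef) (hBz : (B z).PosDef)
    (hAz : (-A z + ∑ i ∈ Finset.univ.erase z, ξ i • A i).PosDef)
    (hB : ∀ i ≠ z, (B i - ξ i • B z).PosDef) :
    ∃ (A' : ι → Matrix m m R) (B' : ι → Matrix n n R),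
      (∀ i, (A' i).PosDef) ∧ (∀ i, (B' i).PosDef) ∧
      ∀ X : Matrix m n R,
        -(A z * X * B z) + ∑ i ∈ Finset.univ.erase z, A i * X * B i = ∑ i, A' i * X * B' i := by
  refine ⟨Function.update A z (-A z + ∑ i ∈ Finset.univ.erase z, ξ i • A i),
    Function.update (fun i => B i - ξ i • B z) z (B z), ?_, ?_, fun X => ?_⟩
  · exact (Function.forall_update_iff A fun _ => Matrix.PosDef).2 ⟨hAz, hA⟩
  · exact (Function.forall_update_iff _ fun _ => Matrix.PosDef).2 ⟨hBz, hB⟩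
  · rw [sum_update_mul_mul_update, ← neg_mul_mul_add_sum_mul_mul_eq_add_sum_sub_smul]

end

/-- Let `m ≥ 2` and `𝒜(X) = −A₁ X B₁ + ∑_{i=2}^m Aᵢ X Bᵢ` with all `Aᵢ, Bᵢ` positive.
If there are positive reals `ξ_k` (`k = 2,…,m`) such that `−A₁ + ∑_{k=2}^m ξ_k A_k`
is positive and `B_k − ξ_k B₁` is positive for every `k = 2,…,m`, then there exist
positive matrices `Aᵢ', Bᵢ'` with `𝒜(X) = ∑ᵢ Aᵢ' X Bᵢ'` for all `X`. -/
theorem remove_minus_sign {n m : ℕ} (hm : 2 ≤ m)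
    (A B : Fin m → Matrix (Fin n) (Fin n) ℂ)
    (hA : ∀ i, (A i).PosDef) (hB : ∀ i, (B i).PosDef)
    (ξ : Fin m → ℝ) (hξ : ∀ k : Fin m, k ≠ ⟨0, by omega⟩ → 0 < ξ k)
    (h1 : (-A ⟨0, by omega⟩
        + ∑ k ∈ Finset.univ.erase ⟨0, by omega⟩, (ξ k : ℂ) • A k).PosDef)
    (h2 : ∀ k : Fin m, k ≠ ⟨0, by omega⟩ → (B k - (ξ k : ℂ) • B ⟨0, by omega⟩).PosDef) :
    ∃ A' B' : Fin m → Matrix (Fin n) (Fin n) ℂ,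
      (∀ i, (A' i).PosDef) ∧ (∀ i, (B' i).PosDef) ∧
      (∀ X : Matrix (Fin n) (Fin n) ℂ,
        -(A ⟨0, by omega⟩ * X * B ⟨0, by omega⟩)
            + ∑ i ∈ Finset.univ.erase ⟨0, by omega⟩, A i * X * B i
          = ∑ i, A' i * X * B' i) := by
  exact remove_minus_sign_general _ A B (fun k => (ξ k : ℂ)) (fun i _ => hA i) (hB _) h1 h2
end

section
/- Let ⟨·,·⟩_* be any inner product on M_n(ℂ) (linear in the first entry, conjugate-linear in the second, conjugate-symmetric, and positive definite). Then there exist m ∈ ℕ and positive matrices A_i, B_i ∈ M_n(ℂ), i = 1, …, m, such that ⟨X, Y⟩_* = trace(−Y* A_1 X B_1 + Σ_{i=2}^m Y* A_i X B_i) for all X, Y ∈ M_n(ℂ). -/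
open Matrix ComplexOrder

open Filter LinearMap
open scoped Kronecker ComplexStarModule

/-!
The identity `star (vec Y) ⬝ᵥ (B ⊗ₖ A) *ᵥ vec X = trace (Yᴴ * A * X * Bᵀ)` turns the claim into one
about the Gram matrix `G` of the form: for some `c > 0`, the matrix `G + c • 1` is a sum of
Kronecker products of positive definite matrices. The real parts of the identities
`P ⊗ₖ Q = (ℜ P + i ℑ P) ⊗ₖ (ℜ Q + i ℑ Q)` show that the Hermitian matrix `G` is a sum of Kronecker
products of Hermitian matrices, and for Hermitian `H` and `K`
`H ⊗ₖ K + 3t² • 1 = (t + H) ⊗ₖ (t + K) + (t - H) ⊗ₖ t + t ⊗ₖ (t - K)`,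
where all factors on the right are positive definite once `t` is large.
-/

section SesquilinearForm

variable {R M ι m n : Type*} [CommSemiring R] [StarRing R] [AddCommMonoid M] [Module R M]

theorem exists_isSymm_sesquilinear (φ : M → M → R)
    (hadd : ∀ x x' y, φ (x + x') y = φ x y + φ x' y) (hsmul : ∀ c x y, φ (c • x) y = c * φ x y)
    (hsymm : ∀ x y, φ y x = starRingEnd R (φ x y)) :
    ∃ B : M →ₗ⋆[R] M →ₗ[R] R, B.IsSymm ∧ ∀ x y, φ x y = B y x :=
  ⟨mk₂'ₛₗ (starRingEnd R) (RingHom.id R) (fun y x => φ x y)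
    (fun y y' x => by rw [hsymm (y + y') x, hadd, map_add, ← hsymm, ← hsymm])
    (fun c y x => by rw [hsymm (c • y) x, hsmul, map_mul, ← hsymm, smul_eq_mul])
    (fun y x x' => hadd x x' y) (fun c y x => hsmul c x y),
    ⟨fun y x => (hsymm x y).symm⟩, fun _ _ => rfl⟩

theorem isHermitian_toMatrix₂ [Fintype ι] [DecidableEq ι] {B : M →ₗ⋆[R] M →ₗ[R] R} (hB : B.IsSymm)
    (b : Module.Basis ι R M) : (toMatrix₂ b b B).IsHermitian := by
  ext i j
  simp only [conjTranspose_apply, toMatrix₂_apply]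
  exact hB.eq (b j) (b i)

variable [Fintype m] [Fintype n]

theorem exists_isHermitian_eq_star_vec_dotProduct_mulVec
    {B : Matrix m n R →ₗ⋆[R] Matrix m n R →ₗ[R] R} (hB : B.IsSymm) :
    ∃ G : Matrix (n × m) (n × m) R, G.IsHermitian ∧
      ∀ X Y, B Y X = star (vec Y) ⬝ᵥ G *ᵥ vec X := by
  classical
  let b := (stdBasis R m n).reindex (Equiv.prodComm m n)
  have repr_eq_vec (X : Matrix m n R) : ⇑(b.repr X) = vec X := by
    ext ⟨j, i⟩
    simp [b, stdBasis, Module.Basis.repr_reindex_apply, -Module.Basis.repr_reindex]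
  refine ⟨toMatrix₂ b b B, isHermitian_toMatrix₂ hB b, fun X Y => ?_⟩
  rw [apply_eq_dotProduct_toMatrix₂_mulVec b b B, repr_eq_vec, repr_eq_vec]
  rfl

theorem star_vec_dotProduct_kronecker_mulVec_vec (A : Matrix m m R) (B : Matrix n n R)
    (X Y : Matrix m n R) :
    star (vec Y) ⬝ᵥ (B ⊗ₖ A) *ᵥ vec X = trace (Yᴴ * A * X * Bᵀ) := by
  rw [kronecker_mulVec_vec, star_vec_dotProduct_vec]
  simp only [Matrix.mul_assoc]

end SesquilinearForm

section Kronecker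

variable {R l m n p : Type*}

theorem neg_kronecker [Mul R] [HasDistribNeg R] (A : Matrix l m R) (B : Matrix n p R) :
    (-A) ⊗ₖ B = -(A ⊗ₖ B) :=
  Matrix.ext fun _ _ => neg_mul _ _

theorem kronecker_neg [Mul R] [HasDistribNeg R] (A : Matrix l m R) (B : Matrix n p R) :
    A ⊗ₖ (-B) = -(A ⊗ₖ B) :=
  Matrix.ext fun _ _ => mul_neg _ _

theorem realPart_kronecker (P : Matrix m m ℂ) (Q : Matrix n n ℂ) :
    (ℜ (P ⊗ₖ Q) : Matrix (m × n) (m × n) ℂ) =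
      (ℜ P : Matrix m m ℂ) ⊗ₖ (ℜ Q : Matrix n n ℂ) -
        (ℑ P : Matrix m m ℂ) ⊗ₖ (ℑ Q : Matrix n n ℂ) := by
  ext ⟨i, i'⟩ ⟨j, j'⟩
  simp only [realPart_apply_coe, imaginaryPart_apply_coe, star_eq_conjTranspose, Matrix.sub_apply,
    Matrix.add_apply, Matrix.smul_apply, kronecker_apply, conjTranspose_apply, star_mul',
    smul_eq_mul, Complex.real_smul]
  push_cast
  linear_combination (P i j - star (P j i)) * (Q i' j' - star (Q j' i')) / 4 * Complex.I_sq

end Kronecker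

section PosDef

variable {𝕜 m n : Type*} [RCLike 𝕜]

theorem posDef_smul_one_add_iff [Fintype n] [DecidableEq n] {H : Matrix n n 𝕜}
    (hH : H.IsHermitian) (t : ℝ) : (t • 1 + H).PosDef ↔ ∀ i, 0 < t + hH.eigenvalues i := by
  have hdiag : t • 1 + H = Unitary.conjStarAlgAut 𝕜 _ hH.eigenvectorUnitary
      (diagonal fun i => (t : 𝕜) + hH.eigenvalues i) := by
    rw [← diagonal_add, ← smul_one_eq_diagonal, map_add, map_smul, map_one,
      RCLike.real_smul_eq_coe_smul (K := 𝕜)]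
    exact congrArg _ hH.spectral_theorem
  rw [hdiag, Unitary.conjStarAlgAut_apply, Unitary.isUnit_coe.posDef_star_right_conjugate_iff,
    posDef_diagonal_iff]
  exact_mod_cast Iff.rfl

theorem eventually_posDef_smul_one_add [Finite n] [DecidableEq n] {H : Matrix n n 𝕜}
    (hH : H.IsHermitian) : ∀ᶠ t : ℝ in atTop, (t • 1 + H).PosDef := by
  cases nonempty_fintype n
  simp only [posDef_smul_one_add_iff hH, eventually_all]
  exact fun i => (tendsto_atTop_add_const_right _ _ tendsto_id).eventually_gt_atTop 0

variable (𝕜 m n) in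
/-- The finite sums of Kronecker products `A ⊗ₖ B` of positive definite matrices. They encode the
forms `(X, Y) ↦ ∑ i, trace (Yᴴ * A i * X * B i)`, and include the empty sum `0`. -/
def posDefKroneckerSums : AddSubmonoid (Matrix (m × n) (m × n) 𝕜) :=
  AddSubmonoid.closure (Set.image2 (· ⊗ₖ ·) {A | A.PosDef} {B | B.PosDef})

theorem kronecker_mem_posDefKroneckerSums {A : Matrix m m 𝕜} {B : Matrix n n 𝕜}
    (hA : A.PosDef) (hB : B.PosDef) : A ⊗ₖ B ∈ posDefKroneckerSums 𝕜 m n :=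
  AddSubmonoid.subset_closure (Set.mem_image2_of_mem hA hB)

theorem exists_eq_sum_kronecker_of_mem_posDefKroneckerSums {G : Matrix (m × n) (m × n) 𝕜}
    (hG : G ∈ posDefKroneckerSums 𝕜 m n) :
    ∃ (k : ℕ) (A : Fin k → Matrix m m 𝕜) (B : Fin k → Matrix n n 𝕜),
      (∀ i, (A i).PosDef) ∧ (∀ i, (B i).PosDef) ∧ G = ∑ i, A i ⊗ₖ B i := by
  obtain ⟨l, hl, rfl⟩ := AddSubmonoid.exists_list_of_mem_closure hG
  choose A hA B hB hAB using fun i : Fin l.length => hl l[i] (l.getElem_mem i.2)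
  exact ⟨l.length, A, B, hA, hB, by simp_rw [hAB]; simp⟩

variable [DecidableEq m] [DecidableEq n]

theorem one_mem_posDefKroneckerSums : 1 ∈ posDefKroneckerSums 𝕜 m n := by
  rw [← one_kronecker_one]
  exact kronecker_mem_posDefKroneckerSums .one .one

variable (𝕜 m n) in
/-- The sums of Kronecker products of positive definite matrices, minus a positive multiple of `1`.
They encode the forms `(X, Y) ↦ ∑ i, trace (Yᴴ * A i * X * B i) - c * trace (Yᴴ * X)`. -/
def shiftedPosDefKroneckerSums : AddSubmonoid (Matrix (m × n) (m × n) 𝕜) where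
  carrier := {G | ∃ c : ℝ, 0 < c ∧ G + c • 1 ∈ posDefKroneckerSums 𝕜 m n}
  zero_mem' := ⟨1, one_pos, by simpa using one_mem_posDefKroneckerSums⟩
  add_mem' := by
    rintro G G' ⟨c, hc, hG⟩ ⟨c', hc', hG'⟩
    refine ⟨c + c', add_pos hc hc', ?_⟩
    rw [add_smul, add_add_add_comm]
    exact add_mem hG hG'

variable [Finite m] [Finite n]

theorem kronecker_mem_shiftedPosDefKroneckerSums {H : Matrix m m 𝕜} {K : Matrix n n 𝕜}
    (hH : H.IsHermitian) (hK : K.IsHermitian) :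
    H ⊗ₖ K ∈ shiftedPosDefKroneckerSums 𝕜 m n := by
  obtain ⟨t, ht, hHt, hHt', hKt, hKt'⟩ := ((eventually_gt_atTop (0 : ℝ)).and <|
    (eventually_posDef_smul_one_add hH).and <| (eventually_posDef_smul_one_add hH.neg).and <|
    (eventually_posDef_smul_one_add hK).and (eventually_posDef_smul_one_add hK.neg)).exists
  have hsplit : H ⊗ₖ K + (3 * t ^ 2) • 1 =
      (t • 1 + H) ⊗ₖ (t • 1 + K) + (t • 1 + -H) ⊗ₖ (t • 1) + (t • 1) ⊗ₖ (t • 1 + -K) := by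
    simp only [← one_kronecker_one, add_kronecker, kronecker_add, smul_kronecker, kronecker_smul,
      neg_kronecker, kronecker_neg]
    module
  refine ⟨3 * t ^ 2, by positivity, ?_⟩
  rw [hsplit]
  refine add_mem (add_mem ?_ ?_) ?_
  · exact kronecker_mem_posDefKroneckerSums hHt hKt
  · exact kronecker_mem_posDefKroneckerSums hHt' (PosDef.one.smul ht)
  · exact kronecker_mem_posDefKroneckerSums (PosDef.one.smul ht) hKt'

theorem realPart_mem_shiftedPosDefKroneckerSums (G : Matrix (m × n) (m × n) ℂ) :
    (ℜ G : Matrix (m × n) (m × n) ℂ) ∈ shiftedPosDefKroneckerSums ℂ m n := by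
  induction G using Matrix.induction_on' with
  | h_zero => simp
  | h_add P Q hP hQ => simpa using add_mem hP hQ
  | h_std_basis p q x =>
    rw [← mul_one x, ← single_kronecker_single, realPart_kronecker, sub_eq_add_neg, ← neg_kronecker]
    exact add_mem (kronecker_mem_shiftedPosDefKroneckerSums (ℜ _).2 (ℜ _).2)
      (kronecker_mem_shiftedPosDefKroneckerSums (-ℑ _).2 (ℑ _).2)

theorem mem_shiftedPosDefKroneckerSums_of_isHermitian {G : Matrix (m × n) (m × n) ℂ}
    (hG : G.IsHermitian) : G ∈ shiftedPosDefKroneckerSums ℂ m n :=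
  hG.isSelfAdjoint.coe_realPart ▸ realPart_mem_shiftedPosDefKroneckerSums G

end PosDef

theorem inner_product_trace_form_general {m n : Type*} [Fintype m] [Fintype n]
    {φ : Matrix m n ℂ →ₗ⋆[ℂ] Matrix m n ℂ →ₗ[ℂ] ℂ} (hφ : φ.IsSymm) :
    ∃ (k : ℕ) (hk : 0 < k) (A : Fin k → Matrix m m ℂ) (B : Fin k → Matrix n n ℂ),
      (∀ i, (A i).PosDef) ∧ (∀ i, (B i).PosDef) ∧
      ∀ X Y, φ Y X = trace (-(Yᴴ * A ⟨0, hk⟩ * X * B ⟨0, hk⟩) +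
        ∑ i ∈ Finset.univ.erase ⟨0, hk⟩, Yᴴ * A i * X * B i) := by
  classical
  obtain ⟨G, hG, hφG⟩ := exists_isHermitian_eq_star_vec_dotProduct_mulVec hφ
  obtain ⟨c, hc, hGc⟩ := mem_shiftedPosDefKroneckerSums_of_isHermitian hG
  obtain ⟨k, B, A, hB, hA, hsum⟩ := exists_eq_sum_kronecker_of_mem_posDefKroneckerSums hGc
  refine ⟨k + 1, k.succ_pos, Fin.cons (c • 1) A, Fin.cons 1 fun i => (B i)ᵀ,
    Fin.cases (PosDef.one.smul hc) hA, Fin.cases .one fun i => (hB i).transpose, fun X Y => ?_⟩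
  calc φ Y X = star (vec Y) ⬝ᵥ (∑ i, B i ⊗ₖ A i - (1 : Matrix n n ℂ) ⊗ₖ (c • 1)) *ᵥ vec X := by
        rw [hφG, ← hsum, kronecker_smul, one_kronecker_one, add_sub_cancel_right]
    _ = ∑ i, trace (Yᴴ * A i * X * (B i)ᵀ) -
          trace (Yᴴ * (c • (1 : Matrix m m ℂ)) * X * (1 : Matrix n n ℂ)) := by
        simp only [sub_mulVec, sum_mulVec, dotProduct_sub, dotProduct_sum,
          star_vec_dotProduct_kronecker_mulVec_vec, transpose_one]
    _ = _ := by
        rw [Finset.sum_erase_eq_sub (Finset.mem_univ _), Fin.sum_univ_succ]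
        simp [trace_sum, sub_eq_neg_add]

/-- Every inner product `⟨·,·⟩_*` on `Mₙ(ℂ)` (linear in the first entry,
conjugate-symmetric, positive definite) has the form
`⟨X, Y⟩_* = trace(−Yᴴ A₁ X B₁ + ∑_{i=2}^m Yᴴ Aᵢ X Bᵢ)` for some `m ∈ ℕ` and
positive matrices `Aᵢ, Bᵢ ∈ Mₙ(ℂ)`. -/
theorem inner_product_trace_form {n : ℕ}
    (φ : Matrix (Fin n) (Fin n) ℂ → Matrix (Fin n) (Fin n) ℂ → ℂ)
    (hadd : ∀ X X' Y : Matrix (Fin n) (Fin n) ℂ, φ (X + X') Y = φ X Y + φ X' Y)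
    (hsmul : ∀ (c : ℂ) (X Y : Matrix (Fin n) (Fin n) ℂ), φ (c • X) Y = c * φ X Y)
    (hsymm : ∀ X Y : Matrix (Fin n) (Fin n) ℂ, φ Y X = starRingEnd ℂ (φ X Y))
    (hpos : ∀ X : Matrix (Fin n) (Fin n) ℂ, X ≠ 0 →
      (φ X X).im = 0 ∧ 0 < (φ X X).re) :
    ∃ (m : ℕ) (hm : 0 < m) (A B : Fin m → Matrix (Fin n) (Fin n) ℂ),
      (∀ i, (A i).PosDef) ∧ (∀ i, (B i).PosDef) ∧
      (∀ X Y : Matrix (Fin n) (Fin n) ℂ,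
        φ X Y = Matrix.trace
          (-(Yᴴ * A ⟨0, hm⟩ * X * B ⟨0, hm⟩)
            + ∑ i ∈ Finset.univ.erase ⟨0, hm⟩, Yᴴ * A i * X * B i)) := by
  obtain ⟨B, hB, hφ⟩ := exists_isSymm_sesquilinear φ hadd hsmul hsymm
  simpa only [hφ] using inner_product_trace_form_general hB
end
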